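/- arXiv:2109.01027 — 2 statements merged into one kernel-verified Lean document; each statement's English description precedes it below -/
import Mathlib

section
/- There exist constants k > 1 and C, ε₀ > 0, depending only on N, Λ and β, such that for every θ > 0 there exists η = η(θ) ∈ (0,1) with the following property: for every R > 0, every ε with 0 < ε < ε₀R, every bounded Borel measurable f, all m, M ∈ ℝ, and every bounded Borel measurable u : ℝ^N → ℝ satisfying L⁺_ε u(x) ≥ −|f(x)| for all x ∈ B_{kR}(0), u ≤ M on B_{kR}(0), and |B_R(0) ∩ {u ≤ m}| ≥ θ |B_R(0)|, one has sup_{B_R(0)} u ≤ (1−η)M + ηm + C R² sup_{B_{kR}(0)} |f|. -/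
open MeasureTheory Metric
open scoped ENNReal

noncomputable section

/-- Second difference `δu(x,y) = u(x+y) + u(x−y) − 2u(x)`. -/
def secondDiff (N : ℕ) (u : EuclideanSpace ℝ (Fin N) → ℝ) (x y : EuclideanSpace ℝ (Fin N)) : ℝ :=
  u (x + y) + u (x - y) - 2 * u x

/-- Discrete maximal Pucci-type operator `L⁺_ε`. -/
def LepsPlus (N : ℕ) (Λ α β ε : ℝ) (u : EuclideanSpace ℝ (Fin N) → ℝ)
    (x : EuclideanSpace ℝ (Fin N)) : ℝ :=
  (1 / (2 * ε ^ 2)) *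
    (α * sSup ((fun z => secondDiff N u x (ε • z)) '' ball (0 : EuclideanSpace ℝ (Fin N)) Λ) +
      β * ⨍ y in ball (0 : EuclideanSpace ℝ (Fin N)) 1, secondDiff N u x (ε • y))


abbrev Eu (N : ℕ) := EuclideanSpace ℝ (Fin N)

def om (N : ℕ) : ℝ := (volume : Measure (Eu N)).real (ball 0 1)

lemma om_pos (N : ℕ) : 0 < om N := by
  unfold om
  rw [measureReal_def]
  exact ENNReal.toReal_pos (measure_ball_pos _ _ one_pos).ne' measure_ball_lt_top.ne

lemma vr_ball (N : ℕ) (x : Eu N) {r : ℝ} (hr : 0 < r) :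
    (volume : Measure (Eu N)).real (ball x r) = r ^ N * om N := by
  rw [measureReal_def, Measure.addHaar_ball_of_pos _ _ hr, ENNReal.toReal_mul,
    ENNReal.toReal_ofReal (by positivity)]
  simp [om, measureReal_def]

lemma vr_cball (N : ℕ) (x : Eu N) {r : ℝ} (hr : 0 ≤ r) :
    (volume : Measure (Eu N)).real (closedBall x r) = r ^ N * om N := by
  rw [measureReal_def, Measure.addHaar_closedBall _ _ hr, ENNReal.toReal_mul,
    ENNReal.toReal_ofReal (by positivity)]
  simp [om, measureReal_def]

lemma intOn_bdd {N : ℕ} {g : Eu N → ℝ} (hg : Measurable g) {B : ℝ} {s : Set (Eu N)}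
    (hs : volume s ≠ ∞) (hB : ∀ y, |g y| ≤ B) : IntegrableOn g s := by
  refine Measure.integrableOn_of_bounded (M := B) hs hg.aestronglyMeasurable ?_
  filter_upwards with y using hB y

/-- Average over the unit ball in dilated coordinates. -/
lemma avg_eq {N : ℕ} (g : Eu N → ℝ) (x : Eu N) {ε : ℝ} (hε : 0 < ε) :
    ε ^ N * om N * (⨍ y in ball (0 : Eu N) 1, g (x + ε • y)) = ∫ p in ball x ε, g p := by
  rw [setAverage_eq, ← integral_indicator measurableSet_ball,
    ← integral_indicator measurableSet_ball]
  have h1 : (fun y => (ball (0 : Eu N) 1).indicator (fun y => g (x + ε • y)) y)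
      = fun y => (fun q => (ball x ε).indicator g (x + q)) (ε • y) := by
    funext y
    by_cases hy : y ∈ ball (0 : Eu N) 1
    · have : x + ε • y ∈ ball x ε := by
        rw [mem_ball_iff_norm] at *
        simp [norm_smul, abs_of_pos hε] at *
        nlinarith
      simp only [Set.indicator_of_mem hy, Set.indicator_of_mem this]
    · have : x + ε • y ∉ ball x ε := by
        rw [mem_ball_iff_norm] at *
        simp [norm_smul, abs_of_pos hε] at *
        nlinarith
      simp only [Set.indicator_of_notMem hy, Set.indicator_of_notMem this]
  have h3 := Measure.integral_comp_smul (volume : Measure (Eu N))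
    (fun q => (ball x ε).indicator g (x + q)) ε
  rw [h1, h3, integral_add_left_eq_self]
  have : (volume : Measure (Eu N)).real (ball 0 1) = om N := rfl
  rw [this]
  have h2 := om_pos N
  rw [abs_of_pos (by positivity)]
  simp
  field_simp

lemma avg_lower {N : ℕ} {g : Eu N → ℝ} (hg : Measurable g) (hb : ∃ B, ∀ y, |g y| ≤ B)
    (x : Eu N) {ε : ℝ} (hε : 0 < ε) {A : Set (Eu N)} (hA : MeasurableSet A) (hAs : A ⊆ ball x ε)
    {h : ℝ} (h0 : ∀ p ∈ ball x ε, 0 ≤ g p) (hh : ∀ p ∈ A, h ≤ g p) :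
    h * (volume : Measure (Eu N)).real A
      ≤ ε ^ N * om N * (⨍ y in ball (0 : Eu N) 1, g (x + ε • y)) := by
  rw [avg_eq g x hε]
  obtain ⟨B, hB⟩ := hb
  have hfin : volume (ball x ε) ≠ ∞ := measure_ball_lt_top.ne
  have hfA : volume A ≠ ∞ := ((measure_mono hAs).trans_lt measure_ball_lt_top).ne
  calc h * (volume : Measure (Eu N)).real A ≤ ∫ p in A, g p :=
        setIntegral_ge_of_const_le_real hA hfA hh (intOn_bdd hg hfA hB)
    _ ≤ ∫ p in ball x ε, g p := by
        refine setIntegral_mono_set (intOn_bdd hg hfin hB) ?_ hAs.eventuallyLE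
        exact (ae_restrict_iff' measurableSet_ball).2 (Filter.Eventually.of_forall h0)

lemma avg_sym {N : ℕ} (g : Eu N → ℝ) :
    (⨍ y in ball (0 : Eu N) 1, g (-y)) = ⨍ y in ball (0 : Eu N) 1, g y := by
  rw [setAverage_eq, setAverage_eq, ← integral_indicator measurableSet_ball,
    ← integral_indicator measurableSet_ball, ← integral_neg_eq_self]
  congr 2
  funext y
  simp [Set.indicator]

lemma bdd_comp {N : ℕ} {v : Eu N → ℝ} (hb : ∃ B, ∀ y, |v y| ≤ B) (φ : Eu N → Eu N) :
    ∃ B, ∀ y, |v (φ y)| ≤ B := by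
  obtain ⟨B, hB⟩ := hb
  exact ⟨B, fun y => hB _⟩

lemma avg_sd {N : ℕ} {v : Eu N → ℝ} (hv : Measurable v) (hb : ∃ B, ∀ y, |v y| ≤ B)
    (x : Eu N) (ε : ℝ) :
    (⨍ y in ball (0 : Eu N) 1, secondDiff N v x (ε • y))
      = 2 * ((⨍ y in ball (0 : Eu N) 1, v (x + ε • y)) - v x) := by
  obtain ⟨B, hB⟩ := hb
  have hfin : volume (ball (0 : Eu N) 1) ≠ ∞ := measure_ball_lt_top.ne
  have i1 : IntegrableOn (fun y => v (x + ε • y)) (ball (0 : Eu N) 1) :=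
    intOn_bdd (by fun_prop) hfin (B := B) (fun y => hB _)
  have i2 : IntegrableOn (fun y => v (x - ε • y)) (ball (0 : Eu N) 1) :=
    intOn_bdd (by fun_prop) hfin (B := B) (fun y => hB _)
  have hs : (⨍ y in ball (0 : Eu N) 1, v (x - ε • y)) = ⨍ y in ball (0 : Eu N) 1, v (x + ε • y) := by
    rw [← avg_sym]; simp
  unfold secondDiff
  rw [setAverage_eq] at hs ⊢
  rw [setAverage_eq] at hs ⊢
  have hom : (volume : Measure (Eu N)).real (ball 0 1) ≠ 0 := (om_pos N).ne'
  have e : (∫ y in ball (0 : Eu N) 1, (v (x + ε • y) + v (x - ε • y) - 2 * v x))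
      = (∫ y in ball (0 : Eu N) 1, v (x + ε • y)) + (∫ y in ball (0 : Eu N) 1, v (x - ε • y))
        - (volume : Measure (Eu N)).real (ball 0 1) * (2 * v x) := by
    rw [← integral_add i1 i2, ← smul_eq_mul (_ : ℝ) (2 * v x), ← setIntegral_const]
    exact integral_sub (i1.add i2) (integrableOn_const hfin)
  rw [e]
  simp only [smul_eq_mul] at *
  field_simp at hs ⊢
  rw [hs]; ring

structure SupSol (N : ℕ) (Λ β ε F K : ℝ) (p : Eu N) (v : Eu N → ℝ) : Prop where
  meas : Measurable v
  bdd : ∃ B, ∀ y, |v y| ≤ B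
  nonneg : ∀ x ∈ ball p K, 0 ≤ v x
  ineq : ∀ x ∈ ball p K, ∀ l : ℝ, (∀ z ∈ ball (0 : Eu N) Λ, l ≤ secondDiff N v x (ε • z)) →
    (1 - β) * l + β * (⨍ y in ball (0 : Eu N) 1, secondDiff N v x (ε • y)) ≤ 2 * ε ^ 2 * F

lemma SupSol.scale {N : ℕ} {Λ β ε F K : ℝ} {p : Eu N} {v : Eu N → ℝ}
    (H : SupSol N Λ β ε F K p v) (q : Eu N) {r h K' : ℝ} (hr : 0 < r) (hh : 0 < h)
    (hK : dist q p + r * K' ≤ K) :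
    SupSol N Λ β (ε / r) (r ^ 2 * F * h) K' 0 (fun x => h * v (q + r • x)) := by
  have hmem : ∀ x ∈ ball (0 : Eu N) K', q + r • x ∈ ball p K := by
    intro x hx
    rw [mem_ball_zero_iff] at hx
    rw [mem_ball]
    calc dist (q + r • x) p ≤ dist (q + r • x) q + dist q p := dist_triangle _ _ _
      _ = r * ‖x‖ + dist q p := by simp [dist_eq_norm, norm_smul, abs_of_pos hr]
      _ < K := by nlinarith
  have hsd : ∀ x y : Eu N, secondDiff N (fun x => h * v (q + r • x)) x ((ε / r) • y)
      = h * secondDiff N v (q + r • x) (ε • y) := by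
    intro x y
    have e1 : r • (x + (ε / r) • y) = r • x + ε • y := by
      rw [smul_add, smul_smul]; congr 2; field_simp
    have e2 : r • (x - (ε / r) • y) = r • x - ε • y := by
      rw [smul_sub, smul_smul]; congr 2; field_simp
    simp only [secondDiff, e1, e2, add_assoc, add_sub_assoc]
    ring
  refine ⟨?_, ?_, ?_, ?_⟩
  · have := H.meas; fun_prop
  · obtain ⟨B, hB⟩ := H.bdd
    refine ⟨h * B, fun y => ?_⟩
    rw [abs_mul, abs_of_pos hh]
    exact mul_le_mul_of_nonneg_left (hB _) hh.le
  · intro x hx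
    exact mul_nonneg hh.le (H.nonneg _ (hmem x hx))
  · intro x hx l hl
    simp only [hsd] at hl ⊢
    have := H.ineq _ (hmem x hx) (l / h) (fun z hz => by
      rw [div_le_iff₀ hh, mul_comm]; exact hl z hz)
    rw [setAverage_eq] at this ⊢
    rw [integral_const_mul]
    simp only [smul_eq_mul] at *
    have h2 := mul_le_mul_of_nonneg_left this hh.le
    calc _ = h * ((1 - β) * (l / h) + β * (((volume : Measure (Eu N)).real (ball 0 1))⁻¹ *
            ∫ y in ball (0 : Eu N) 1, secondDiff N v (q + r • x) (ε • y))) := by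
            field_simp
      _ ≤ _ := h2
      _ = _ := by field_simp


lemma dphi {N : ℕ} {A : ℝ} (hA : 0 < A) (x h : Eu N) (hh : A * ‖h‖ ^ 2 ≤ 1 / 2) :
    2 * Real.exp (-A * ‖x‖ ^ 2) * (-A * ‖h‖ ^ 2 + A ^ 2 * (inner ℝ x h) ^ 2) ≤
    Real.exp (-A * ‖x + h‖ ^ 2) + Real.exp (-A * ‖x - h‖ ^ 2) - 2 * Real.exp (-A * ‖x‖ ^ 2) := by
  have e1 : Real.exp (-A * ‖x + h‖ ^ 2) = Real.exp (-A * ‖x‖ ^ 2) * (Real.exp (-A * ‖h‖ ^ 2) *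
      Real.exp (-(2 * A * inner ℝ x h))) := by
    rw [← Real.exp_add, ← Real.exp_add, norm_add_sq_real]; congr 1; ring
  have e2 : Real.exp (-A * ‖x - h‖ ^ 2) = Real.exp (-A * ‖x‖ ^ 2) * (Real.exp (-A * ‖h‖ ^ 2) *
      Real.exp (2 * A * inner ℝ x h)) := by
    rw [← Real.exp_add, ← Real.exp_add, norm_sub_sq_real]; congr 1; ring
  rw [e1, e2]
  set s := 2 * A * inner ℝ x h with hs
  set t := A * ‖h‖ ^ 2 with ht
  have h1 : 1 - t ≤ Real.exp (-A * ‖h‖ ^ 2) := by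
    have := Real.add_one_le_exp (-A * ‖h‖ ^ 2)
    rw [ht]; linarith
  have h2 : 2 + s ^ 2 ≤ Real.exp (-s) + Real.exp s := by
    have h0 := Real.cosh_eq s
    have h1 := Real.cosh_sq' (s / 2)
    have h2 := Real.cosh_two_mul (s / 2)
    rw [mul_div_cancel₀ s two_ne_zero] at h2
    have h3 : (s / 2) ^ 2 ≤ Real.sinh (s / 2) ^ 2 := by
      rw [sq_le_sq]
      rcases le_total 0 (s / 2) with h | h
      · rw [abs_of_nonneg h, abs_of_nonneg (Real.sinh_nonneg_iff.2 h)]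
        exact Real.self_le_sinh_iff.2 h
      · rw [abs_of_nonpos h, abs_of_nonpos (Real.sinh_nonpos_iff.2 h)]
        have := Real.sinh_le_self_iff.2 h
        linarith
    nlinarith
  have ht0 : 0 ≤ t := by positivity
  have h3 : (1 - t) * (2 + s ^ 2) ≤ Real.exp (-A * ‖h‖ ^ 2) * (Real.exp (-s) + Real.exp s) := by
    apply mul_le_mul h1 h2 (by positivity) (by positivity)
  have h4 : 2 * (-t + A ^ 2 * (inner ℝ x h) ^ 2) ≤ (1 - t) * (2 + s ^ 2) - 2 := by
    have : A ^ 2 * (inner ℝ x h) ^ 2 = s ^ 2 / 4 := by rw [hs]; ring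
    rw [this]
    nlinarith [sq_nonneg s]
  have h5 : 0 < Real.exp (-A * ‖x‖ ^ 2) := Real.exp_pos _
  have h6 : -A * ‖h‖ ^ 2 = -t := by rw [ht]; ring
  rw [h6] at h3 ⊢
  nlinarith [mul_le_mul_of_nonneg_left (h4.trans (sub_le_sub_right h3 2)) h5.le]

set_option maxHeartbeats 4000000 in
lemma expand (N : ℕ) (Λ β : ℝ) (hΛ : 1 ≤ Λ) (hβ : 0 < β) (hβ1 : β ≤ 1) :
    ∃ ε1 c τ : ℝ, 0 < ε1 ∧ 0 < c ∧ 0 < τ ∧ ∀ ε F : ℝ, ∀ v : Eu N → ℝ, 0 < ε → ε ≤ ε1 →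
      SupSol N Λ β ε F 3 0 v → F ≤ τ → (∀ x ∈ closedBall (0 : Eu N) (1 / 2), 1 ≤ v x) →
      ∀ x ∈ closedBall (0 : Eu N) 1, c ≤ v x := by
  set κ : ℝ := β * (1 / 4) ^ N / 64 with hκ
  have hκ0 : 0 < κ := by positivity
  set A : ℝ := (Λ ^ 2 + β + 1) / κ with hA
  have hA0 : 0 < A := by positivity
  have hAκ : κ * A = Λ ^ 2 + β + 1 := by rw [hA]; field_simp
  have hΛ0 : 0 < Λ := by linarith
  have hexp : Real.exp (-A * 4) < Real.exp (-A) := Real.exp_lt_exp.2 (by linarith)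
  refine ⟨min (1 / Λ) (1 / (2 * A * Λ ^ 2 + 1)), Real.exp (-A) - Real.exp (-A * 4),
    Real.exp (-A * 4) * A / 2, by positivity, by linarith, by positivity, ?_⟩
  intro ε F v hε hε1 H hF hv
  have hεΛ : ε * Λ ≤ 1 := by
    have := hε1.trans (min_le_left _ _)
    rwa [le_div_iff₀ hΛ0] at this
  have hε2 : A * (ε * Λ) ^ 2 ≤ 1 / 2 := by
    have := hε1.trans (min_le_right _ _)
    rw [le_div_iff₀ (by positivity)] at this
    have h2 : ε ≤ 1 := by nlinarith
    have h3 : ε * ε * (2 * A * Λ ^ 2) ≤ 1 := by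
      have : ε * ε ≤ ε := by nlinarith
      have := mul_le_mul_of_nonneg_right this (show 0 ≤ 2 * A * Λ ^ 2 by positivity)
      nlinarith
    nlinarith
  set φ : Eu N → ℝ := fun x => Real.exp (-A * ‖x‖ ^ 2) - Real.exp (-A * 4) with hφ
  have hφm : Measurable φ := by
    have : Continuous φ := by rw [hφ]; fun_prop
    exact this.measurable
  have hexp1 : ∀ x : Eu N, Real.exp (-A * ‖x‖ ^ 2) ≤ 1 := fun x => by
    rw [Real.exp_le_one_iff]; nlinarith [sq_nonneg ‖x‖]
  have hexp2 : Real.exp (-A * 4) ≤ 1 := by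
    rw [Real.exp_le_one_iff]; linarith
  have hφ1 : ∀ x, φ x ≤ 1 := fun x => by
    have := hexp1 x
    have := Real.exp_pos (-A * 4)
    simp only [hφ]; linarith
  have hφb : ∃ B, ∀ x, |φ x| ≤ B := ⟨1, fun x => by
    rw [abs_le]
    refine ⟨?_, hφ1 x⟩
    have := Real.exp_pos (-A * ‖x‖ ^ 2)
    simp only [hφ]; linarith⟩
  have key : ∀ x ∈ ball (0 : Eu N) 3, φ x ≤ v x := by
    by_contra hcon
    push Not at hcon
    obtain ⟨x1, hx1, hx1'⟩ := hcon
    set S : Set ℝ := (fun x => v x - φ x) '' ball (0 : Eu N) 3 with hS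
    have hSb : BddBelow S := ⟨-1, by
      rintro _ ⟨x, hx, rfl⟩
      have := H.nonneg x hx
      have := hφ1 x
      simp only; linarith⟩
    have hSn : S.Nonempty := ⟨_, x1, hx1, rfl⟩
    set m := sInf S with hm
    have hmle : ∀ x ∈ ball (0 : Eu N) 3, m ≤ v x - φ x := fun x hx => csInf_le hSb ⟨x, hx, rfl⟩
    have hm0 : m < 0 := by have := hmle x1 hx1; linarith
    set τ' : ℝ := min (-m / 2) (ε ^ 2 * (Real.exp (-A * 4) * A / 4)) with hτ'
    have hτ0 : 0 < τ' := lt_min (by linarith) (by positivity)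
    obtain ⟨_, ⟨x, hx, rfl⟩, hxm⟩ := exists_lt_of_csInf_lt hSn (show sInf S < m + τ' by linarith)
    simp only at hxm
    have hτ1 : τ' ≤ -m / 2 := min_le_left _ _
    have hτ2 : τ' ≤ ε ^ 2 * (Real.exp (-A * 4) * A / 4) := min_le_right _ _
    have hneg : v x < φ x := by linarith
    have hxl : 1 / 2 < ‖x‖ := by
      by_contra hc
      have := hv x (by simpa using not_lt.1 hc)
      have := hφ1 x
      linarith
    have hxu : ‖x‖ < 2 := by
      by_contra hc
      have h0 := H.nonneg x hx
      have : Real.exp (-A * ‖x‖ ^ 2) ≤ Real.exp (-A * 4) := by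
        apply Real.exp_le_exp.2
        have : (4 : ℝ) ≤ ‖x‖ ^ 2 := by nlinarith [not_lt.1 hc]
        nlinarith
      simp only [hφ] at hneg
      linarith
    set e := Real.exp (-A * ‖x‖ ^ 2) with he
    have he4 : Real.exp (-A * 4) ≤ e := by
      apply Real.exp_le_exp.2
      have : ‖x‖ ^ 2 ≤ 4 := by nlinarith [norm_nonneg x]
      nlinarith
    have he0 : 0 < e := Real.exp_pos _
    -- second differences
    have hmem : ∀ h : Eu N, ‖h‖ ≤ 1 → x + h ∈ ball (0 : Eu N) 3 ∧ x - h ∈ ball (0 : Eu N) 3 := by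
      intro h hh
      simp only [mem_ball_zero_iff]
      exact ⟨by linarith [norm_add_le x h], by linarith [norm_sub_le x h]⟩
    have hsd : ∀ h : Eu N, ‖h‖ ≤ 1 → secondDiff N φ x h - 2 * τ' ≤ secondDiff N v x h := by
      intro h hh
      have h1 := hmle _ (hmem h hh).1
      have h2 := hmle _ (hmem h hh).2
      simp only [secondDiff]
      linarith
    have hsdφ : ∀ h : Eu N, A * ‖h‖ ^ 2 ≤ 1 / 2 →
        2 * e * (-A * ‖h‖ ^ 2 + A ^ 2 * (inner ℝ x h) ^ 2) ≤ secondDiff N φ x h := by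
      intro h hh
      have := dphi hA0 x h hh
      simp only [secondDiff, hφ]
      linarith
    have hnz : ∀ z ∈ ball (0 : Eu N) Λ, ‖ε • z‖ ≤ ε * Λ := by
      intro z hz
      rw [mem_ball_zero_iff] at hz
      rw [norm_smul, Real.norm_of_nonneg hε.le]
      exact mul_le_mul_of_nonneg_left hz.le hε.le
    have hAz : ∀ z ∈ ball (0 : Eu N) Λ, A * ‖ε • z‖ ^ 2 ≤ A * (ε * Λ) ^ 2 := by
      intro z hz
      have := hnz z hz
      gcongr
    have hl := H.ineq x hx (2 * e * (-A * (ε * Λ) ^ 2) - 2 * τ') (by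
      intro z hz
      have h1 := hsd (ε • z) ((hnz z hz).trans hεΛ)
      have h2 := hsdφ (ε • z) ((hAz z hz).trans hε2)
      have h3 := hAz z hz
      have h4 : 0 ≤ A ^ 2 * (inner ℝ x (ε • z)) ^ 2 := by positivity
      have h5 : 2 * e * (-A * (ε * Λ) ^ 2) ≤
        2 * e * (-A * ‖ε • z‖ ^ 2 + A ^ 2 * (inner ℝ x (ε • z)) ^ 2) :=
        mul_le_mul_of_nonneg_left (by linarith) (by positivity)
      linarith)
    -- average
    have hsub1 : ball (0 : Eu N) 1 ⊆ ball (0 : Eu N) Λ := ball_subset_ball hΛ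
    set xh : Eu N := (1 / (2 * ‖x‖)) • x with hxh
    have hxp : 0 < ‖x‖ := by linarith
    have hxhn : ‖xh‖ = 1 / 2 := by
      rw [hxh, norm_smul, Real.norm_of_nonneg (by positivity)]; field_simp
    have hBs : ball xh (1 / 4) ⊆ ball (0 : Eu N) 1 := by
      intro y hy
      rw [mem_ball_iff_norm] at hy
      rw [mem_ball_zero_iff]
      have := norm_add_le (y - xh) xh
      rw [sub_add_cancel] at this
      linarith
    set g : Eu N → ℝ := fun y => secondDiff N v x (ε • y) + 2 * τ' + 2 * e * A * ε ^ 2 with hg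
    have hglow : ∀ y ∈ ball (0 : Eu N) 1, 2 * e * A ^ 2 * ε ^ 2 * (inner ℝ x y) ^ 2 ≤ g y := by
      intro y hy
      have hy' := hsub1 hy
      have h1 := hsd (ε • y) ((hnz y hy').trans hεΛ)
      have h2 := hsdφ (ε • y) ((hAz y hy').trans hε2)
      rw [mem_ball_zero_iff] at hy
      have h3 : ‖ε • y‖ ^ 2 ≤ ε ^ 2 := by
        rw [norm_smul, Real.norm_of_nonneg hε.le, mul_pow]
        have : ‖y‖ ^ 2 ≤ 1 := by nlinarith [norm_nonneg y]
        nlinarith [sq_nonneg ε]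
      rw [inner_smul_right] at h2
      have h4 : 2 * e * A * ‖ε • y‖ ^ 2 ≤ 2 * e * A * ε ^ 2 :=
        mul_le_mul_of_nonneg_left h3 (by positivity)
      simp only [hg]
      nlinarith
    have hgm : Measurable g := by
      have := H.meas
      simp only [hg, secondDiff]
      fun_prop
    have hgb : ∃ B, ∀ y, |g y| ≤ B := by
      obtain ⟨B, hB⟩ := H.bdd
      refine ⟨4 * B + 2 * τ' + 2 * e * A * ε ^ 2, fun y => ?_⟩
      have h1 := abs_le.1 (hB (x + ε • y))
      have h2 := abs_le.1 (hB (x - ε • y))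
      have h3 := abs_le.1 (hB x)
      have h4 : 0 ≤ 2 * e * A * ε ^ 2 := by positivity
      simp only [hg, secondDiff]
      rw [abs_le]
      constructor <;> linarith
    have hav := avg_lower hgm hgb 0 one_pos measurableSet_ball hBs
      (h := 2 * e * A ^ 2 * ε ^ 2 * (1 / 64))
      (fun p hp => le_trans (by positivity) (hglow p hp)) (by
        intro y hy
        refine le_trans ?_ (hglow y (hBs hy))
        refine mul_le_mul_of_nonneg_left ?_ (by positivity)
        have h1 : inner ℝ x xh = ‖x‖ / 2 := by
          rw [hxh, inner_smul_right, real_inner_self_eq_norm_sq]; field_simp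
        have h2 : inner ℝ x y = ‖x‖ / 2 + inner ℝ x (y - xh) := by
          rw [inner_sub_right, h1]; ring
        rw [mem_ball_iff_norm] at hy
        have h3 := abs_le.1 (abs_real_inner_le_norm x (y - xh))
        have h4 : ‖x‖ * ‖y - xh‖ ≤ ‖x‖ * (1 / 4) := mul_le_mul_of_nonneg_left hy.le hxp.le
        have h5 : 1 / 8 ≤ inner ℝ x y := by rw [h2]; linarith [h3.1]
        nlinarith)
    rw [vr_ball _ _ (by norm_num)] at hav
    have havg : (⨍ y in ball (0 : Eu N) 1, g (0 + (1 : ℝ) • y))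
        = (⨍ y in ball (0 : Eu N) 1, secondDiff N v x (ε • y)) + (2 * τ' + 2 * e * A * ε ^ 2) := by
      have hfin : volume (ball (0 : Eu N) 1) ≠ ∞ := measure_ball_lt_top.ne
      obtain ⟨B, hB⟩ := hgb
      have i1 : IntegrableOn (fun y => secondDiff N v x (ε • y)) (ball (0 : Eu N) 1) := by
        have : (fun y => secondDiff N v x (ε • y)) = fun y => g y - (2 * τ' + 2 * e * A * ε ^ 2) := by
          funext y; simp only [hg]; ring
        rw [this]
        exact (intOn_bdd hgm hfin hB).sub (integrableOn_const hfin)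
      have : (fun y => g (0 + (1 : ℝ) • y))
          = fun y => secondDiff N v x (ε • y) + (2 * τ' + 2 * e * A * ε ^ 2) := by
        funext y; simp [hg]; ring
      rw [this, setAverage_eq, setAverage_eq, integral_add i1 (integrableOn_const hfin),
        setIntegral_const]
      have hom : (volume : Measure (Eu N)).real (ball 0 1) ≠ 0 := (om_pos N).ne'
      simp only [smul_eq_mul]
      field_simp
    rw [havg] at hav
    set D := ⨍ y in ball (0 : Eu N) 1, secondDiff N v x (ε • y) with hD
    have hom := om_pos N
    have hav2 : 2 * e * A ^ 2 * ε ^ 2 * (1 / 64) * (1 / 4) ^ N ≤ D + (2 * τ' + 2 * e * A * ε ^ 2) := by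
      have : (2 * e * A ^ 2 * ε ^ 2 * (1 / 64) * (1 / 4) ^ N) * om N
          ≤ (D + (2 * τ' + 2 * e * A * ε ^ 2)) * om N := by
        simp only [one_pow] at hav
        linarith
      exact le_of_mul_le_mul_right this hom
    have hav3 : 2 * e * A * ε ^ 2 * (κ * A) ≤ β * (D + (2 * τ' + 2 * e * A * ε ^ 2)) := by
      have := mul_le_mul_of_nonneg_left hav2 hβ.le
      rw [hκ]
      linarith
    rw [hAκ] at hav3
    have h7 : (1 - β) * (2 * e * (-A * (ε * Λ) ^ 2)) ≥ 2 * e * (-A * (ε * Λ) ^ 2) := by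
      have : 0 ≤ β * (2 * e * (A * (ε * Λ) ^ 2)) := by positivity
      linarith
    have h8 : 2 * e * A * ε ^ 2 - 2 * τ' ≤ 2 * ε ^ 2 * F := by
      linarith
    have h9 : 2 * ε ^ 2 * F ≤ 2 * ε ^ 2 * (Real.exp (-A * 4) * A / 2) :=
      mul_le_mul_of_nonneg_left hF (by positivity)
    have h10 : A * ε ^ 2 * Real.exp (-A * 4) ≤ A * ε ^ 2 * e :=
      mul_le_mul_of_nonneg_left he4 (by positivity)
    have h11 : 0 < A * ε ^ 2 * e := by positivity
    linarith
  intro x hx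
  rw [mem_closedBall_zero_iff] at hx
  refine le_trans ?_ (key x (by rw [mem_ball_zero_iff]; linarith))
  simp only [hφ]
  have : Real.exp (-A) ≤ Real.exp (-A * ‖x‖ ^ 2) := by
    apply Real.exp_le_exp.2
    have : ‖x‖ ^ 2 ≤ 1 := by nlinarith [norm_nonneg x]
    nlinarith
  linarith


lemma vr_preimage {N : ℕ} (x : Eu N) {ε : ℝ} (hε : 0 < ε) (S : Set (Eu N)) :
    ε ^ N * (volume : Measure (Eu N)).real ((fun y => x + ε • y) ⁻¹' S)
      = (volume : Measure (Eu N)).real S := by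
  have h1 : (fun y => x + ε • y) ⁻¹' S = (fun y => ε • y) ⁻¹' ((fun p => x + p) ⁻¹' S) := rfl
  rw [h1, measureReal_def, Measure.addHaar_preimage_smul _ hε.ne', measure_preimage_add,
    ENNReal.toReal_mul, ENNReal.toReal_ofReal (by positivity), measureReal_def,
    abs_of_pos (by positivity)]
  simp
  field_simp

lemma sum_lemma {N : ℕ} {ι : Type*} {u : Set ι} (hc : u.Countable) {D S : ι → Set (Eu N)}
    (hdisj : u.PairwiseDisjoint S) (hSm : ∀ i ∈ u, MeasurableSet (S i)) {V T : Set (Eu N)}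
    (hV : V ⊆ ⋃ i ∈ u, D i) (hT : ∀ i ∈ u, S i ⊆ T) {C : ℝ} (hC : 0 ≤ C)
    (hDS : ∀ i ∈ u, (volume : Measure (Eu N)).real (D i) ≤ C * (volume : Measure (Eu N)).real (S i))
    (hDf : ∀ i ∈ u, volume (D i) ≠ ∞) (hTf : volume T ≠ ∞) :
    (volume : Measure (Eu N)).real V ≤ C * (volume : Measure (Eu N)).real T := by
  have key : volume V ≤ ENNReal.ofReal C * volume T := by
    have := hc.to_subtype
    calc volume V ≤ volume (⋃ i ∈ u, D i) := measure_mono hV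
      _ ≤ ∑' i : u, volume (D i) := measure_biUnion_le _ hc _
      _ ≤ ∑' i : u, ENNReal.ofReal C * volume (S i) := by
          refine ENNReal.tsum_le_tsum fun i => ?_
          have hS : volume (S i) ≠ ∞ := ((measure_mono (hT i i.2)).trans_lt hTf.lt_top).ne
          have h := hDS i i.2
          rw [measureReal_def, measureReal_def] at h
          rw [← ENNReal.ofReal_toReal (hDf i i.2), ← ENNReal.ofReal_toReal hS,
            ← ENNReal.ofReal_mul hC]
          exact ENNReal.ofReal_le_ofReal h
      _ = ENNReal.ofReal C * volume (⋃ i ∈ u, S i) := by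
          rw [ENNReal.tsum_mul_left, measure_biUnion hc hdisj hSm]
      _ ≤ _ := by
          gcongr
          exact Set.iUnion₂_subset hT
  rw [measureReal_def, measureReal_def]
  have h2 := ENNReal.toReal_mono (ENNReal.mul_ne_top ENNReal.ofReal_ne_top hTf) key
  rwa [ENNReal.toReal_mul, ENNReal.toReal_ofReal hC] at h2

def C2 (N : ℕ) (Λ β : ℝ) : ℝ := (2 * ((2 + Λ ^ 2) / β) + 4) * 2 * 32 ^ N

def badSet (N : ℕ) (ε c : ℝ) (v : Eu N → ℝ) (x y : Eu N) : Set (Eu N) :=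
  {p | p ∈ ball x ε ∧ v x + ‖x - y‖ ^ 2 + c * ε ^ 2 ≤ v p + ‖p - y‖ ^ 2}

lemma par_id {N : ℕ} (x y h : Eu N) :
    ‖x + h - y‖ ^ 2 + ‖x - h - y‖ ^ 2 = 2 * ‖x - y‖ ^ 2 + 2 * ‖h‖ ^ 2 := by
  have h1 := parallelogram_law_with_norm ℝ (x - y) h
  have e1 : x + h - y = x - y + h := by abel
  have e2 : x - h - y = x - y - h := by abel
  rw [e1, e2]; nlinarith

lemma contact {N : ℕ} {Λ β ε F : ℝ} {v : Eu N → ℝ} (hΛ : 1 ≤ Λ) (hβ : 0 < β) (hβ1 : β ≤ 1)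
    (hε : 0 < ε) (hεΛ : ε * Λ ≤ 1) (H : SupSol N Λ β ε F 2 0 v) (hF : F ≤ 1) (x y : Eu N)
    (hx : ‖x‖ < 1)
    (hmin : ∀ p ∈ ball (0 : Eu N) 2, v x + ‖x - y‖ ^ 2 - ε ^ 2 ≤ v p + ‖p - y‖ ^ 2) :
    (volume : Measure (Eu N)).real (badSet N ε (C2 N Λ β) v x y)
      ≤ (ε / 32) ^ N * om N / 2 := by
  have hΛ0 : 0 < Λ := by linarith
  have hmem : ∀ h : Eu N, ‖h‖ ≤ 1 → x + h ∈ ball (0 : Eu N) 2 ∧ x - h ∈ ball (0 : Eu N) 2 := by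
    intro h hh
    simp only [mem_ball_zero_iff]
    exact ⟨by linarith [norm_add_le x h], by linarith [norm_sub_le x h]⟩
  have hnz : ∀ z ∈ ball (0 : Eu N) Λ, ‖ε • z‖ ≤ ε * Λ := by
    intro z hz
    rw [mem_ball_zero_iff] at hz
    rw [norm_smul, Real.norm_of_nonneg hε.le]
    exact mul_le_mul_of_nonneg_left hz.le hε.le
  have hl := H.ineq x (by rw [mem_ball_zero_iff]; linarith) (-2 * ε ^ 2 - 2 * (ε * Λ) ^ 2) (by
    intro z hz
    have h0 := hnz z hz
    obtain ⟨m1, m2⟩ := hmem (ε • z) (h0.trans hεΛ)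
    have h1 := hmin _ m1
    have h2 := hmin _ m2
    have h3 := par_id x y (ε • z)
    have h4 : ‖ε • z‖ ^ 2 ≤ (ε * Λ) ^ 2 := by gcongr
    simp only [secondDiff]
    linarith)
  set D := ⨍ y in ball (0 : Eu N) 1, secondDiff N v x (ε • y) with hD
  have hD1 : D ≤ 2 * ε ^ 2 * ((2 + Λ ^ 2) / β) := by
    have : β * D ≤ 2 * ε ^ 2 * (2 + Λ ^ 2) := by
      have h1 : 0 ≤ β * (2 * ε ^ 2 + 2 * (ε * Λ) ^ 2) := by positivity
      have h2 : 2 * ε ^ 2 * F ≤ 2 * ε ^ 2 * 1 := mul_le_mul_of_nonneg_left hF (by positivity)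
      nlinarith
    rw [← mul_div_assoc, le_div_iff₀ hβ]
    linarith
  set g : Eu N → ℝ := fun y' => secondDiff N v x (ε • y') + 4 * ε ^ 2 with hg
  have hsub1 : ball (0 : Eu N) 1 ⊆ ball (0 : Eu N) Λ := ball_subset_ball hΛ
  have hglow : ∀ y' ∈ ball (0 : Eu N) 1,
      0 ≤ g y' ∧ v (x + ε • y') + ‖x + ε • y' - y‖ ^ 2 - (v x + ‖x - y‖ ^ 2) ≤ g y' := by
    intro y' hy'
    have h0 := hnz y' (hsub1 hy')
    obtain ⟨m1, m2⟩ := hmem (ε • y') (h0.trans hεΛ)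
    have h1 := hmin _ m1
    have h2 := hmin _ m2
    have h3 := par_id x y (ε • y')
    have h4 : ‖ε • y'‖ ^ 2 ≤ ε ^ 2 := by
      rw [mem_ball_zero_iff] at hy'
      rw [norm_smul, Real.norm_of_nonneg hε.le, mul_pow]
      have : ‖y'‖ ^ 2 ≤ 1 := by nlinarith [norm_nonneg y']
      nlinarith [sq_nonneg ε]
    simp only [hg, secondDiff]
    have := sq_nonneg ε
    constructor <;> linarith
  have hgm : Measurable g := by
    have := H.meas
    simp only [hg, secondDiff]
    fun_prop
  have hgb : ∃ B, ∀ y, |g y| ≤ B := by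
    obtain ⟨B, hB⟩ := H.bdd
    refine ⟨4 * B + 4 * ε ^ 2, fun y => ?_⟩
    have h1 := abs_le.1 (hB (x + ε • y))
    have h2 := abs_le.1 (hB (x - ε • y))
    have h3 := abs_le.1 (hB x)
    have h4 : 0 ≤ ε ^ 2 := by positivity
    simp only [hg, secondDiff]
    rw [abs_le]
    constructor <;> linarith
  have hbm : MeasurableSet (badSet N ε (C2 N Λ β) v x y) := by
    have := H.meas
    have h1 : MeasurableSet {p : Eu N | v x + ‖x - y‖ ^ 2 + C2 N Λ β * ε ^ 2 ≤ v p + ‖p - y‖ ^ 2} :=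
      measurableSet_le measurable_const (by fun_prop)
    exact measurableSet_ball.inter h1
  set A : Set (Eu N) := (fun y' => x + ε • y') ⁻¹' (badSet N ε (C2 N Λ β) v x y) with hA
  have hAm : MeasurableSet A := by
    refine hbm.preimage ?_
    fun_prop
  have hAs : A ⊆ ball (0 : Eu N) 1 := by
    intro y' hy'
    have h1 : x + ε • y' ∈ ball x ε := hy'.1
    rw [mem_ball_iff_norm] at h1
    rw [mem_ball_zero_iff]
    simp [norm_smul, abs_of_pos hε] at h1
    nlinarith
  have hav := avg_lower hgm hgb 0 one_pos hAm hAs (h := C2 N Λ β * ε ^ 2)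
    (fun p hp => (hglow p hp).1) (fun p hp => by
      have h1 := hp.2
      have h2 := (hglow p (hAs hp)).2
      simp only at h1
      linarith)
  have havg : (⨍ y in ball (0 : Eu N) 1, g (0 + (1 : ℝ) • y)) = D + 4 * ε ^ 2 := by
    have hfin : volume (ball (0 : Eu N) 1) ≠ ∞ := measure_ball_lt_top.ne
    obtain ⟨B, hB⟩ := hgb
    have i1 : IntegrableOn (fun y => secondDiff N v x (ε • y)) (ball (0 : Eu N) 1) := by
      have : (fun y => secondDiff N v x (ε • y)) = fun y => g y - 4 * ε ^ 2 := by
        funext y; simp only [hg]; ring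
      rw [this]
      exact (intOn_bdd hgm hfin hB).sub (integrableOn_const hfin)
    have : (fun y => g (0 + (1 : ℝ) • y))
        = fun y => secondDiff N v x (ε • y) + 4 * ε ^ 2 := by
      funext y; simp [hg]
    rw [this, hD, setAverage_eq, setAverage_eq, integral_add i1 (integrableOn_const hfin),
      setIntegral_const]
    have hom : (volume : Measure (Eu N)).real (ball 0 1) ≠ 0 := (om_pos N).ne'
    simp only [smul_eq_mul]
    field_simp
  rw [havg] at hav
  have hpre := vr_preimage x hε (badSet N ε (C2 N Λ β) v x y)
  rw [← hA] at hpre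
  rw [← hpre]
  set a := (volume : Measure (Eu N)).real A
  have hom := om_pos N
  set P : ℝ := 2 * ((2 + Λ ^ 2) / β) + 4 with hP
  have hP0 : 0 < P := by positivity
  have h1 : P * 2 * 32 ^ N * ε ^ 2 * a ≤ om N * (P * ε ^ 2) := by
    calc _ = C2 N Λ β * ε ^ 2 * a := by rw [C2]
      _ ≤ 1 ^ N * om N * (D + 4 * ε ^ 2) := hav
      _ = om N * (D + 4 * ε ^ 2) := by simp
      _ ≤ om N * (P * ε ^ 2) := by
        refine mul_le_mul_of_nonneg_left ?_ hom.le
        rw [hP]; linarith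
  have h2 : 2 * 32 ^ N * a ≤ om N := by
    have : (P * ε ^ 2) * (2 * 32 ^ N * a) ≤ (P * ε ^ 2) * om N := by linarith
    exact le_of_mul_le_mul_left this (by positivity)
  have h3 : a ≤ om N / (2 * 32 ^ N) := by rw [le_div_iff₀ (by positivity)]; linarith
  calc ε ^ N * a ≤ ε ^ N * (om N / (2 * 32 ^ N)) := by gcongr
    _ = _ := by rw [div_pow]; field_simp

lemma exists_good {N : ℕ} {ε c : ℝ} (hε : 0 < ε) {v : Eu N → ℝ} {x y : Eu N}
    (hb : (volume : Measure (Eu N)).real (badSet N ε c v x y) ≤ (ε / 32) ^ N * om N / 2)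
    (q : Eu N) (hq : ‖q - x‖ ≤ ε / 2) :
    ∃ p, ‖p - q‖ < ε / 32 ∧ v p + ‖p - y‖ ^ 2 < v x + ‖x - y‖ ^ 2 + c * ε ^ 2 := by
  by_contra hcon
  push Not at hcon
  have hsub : ball q (ε / 32) ⊆ badSet N ε c v x y := by
    intro p hp
    rw [mem_ball_iff_norm] at hp
    refine ⟨?_, hcon p hp⟩
    rw [mem_ball_iff_norm]
    have := norm_add_le (p - q) (q - x)
    rw [sub_add_sub_cancel] at this
    linarith
  have hfin : volume (badSet N ε c v x y) ≠ ∞ :=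
    ((measure_mono (fun p hp => hp.1 : badSet N ε c v x y ⊆ ball x ε)).trans_lt
      measure_ball_lt_top).ne
  have h1 := measureReal_mono hsub hfin
  rw [vr_ball _ _ (by positivity)] at h1
  have : 0 < (ε / 32) ^ N * om N := mul_pos (by positivity) (om_pos N)
  linarith

lemma vertex_close {N : ℕ} {ε c : ℝ} (hε : 0 < ε) (hε1 : ε ≤ 1) {v : Eu N → ℝ} {x1 x2 y1 y2 : Eu N}
    (hx1 : ‖x1‖ < 1) (hx2 : ‖x2‖ < 1)
    (hb1 : (volume : Measure (Eu N)).real (badSet N ε c v x1 y1) ≤ (ε / 32) ^ N * om N / 2)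
    (hb2 : (volume : Measure (Eu N)).real (badSet N ε c v x2 y2) ≤ (ε / 32) ^ N * om N / 2)
    (hm1 : ∀ p ∈ ball (0 : Eu N) 2, v x1 + ‖x1 - y1‖ ^ 2 - ε ^ 2 ≤ v p + ‖p - y1‖ ^ 2)
    (hm2 : ∀ p ∈ ball (0 : Eu N) 2, v x2 + ‖x2 - y2‖ ^ 2 - ε ^ 2 ≤ v p + ‖p - y2‖ ^ 2)
    (hc : 0 ≤ c) (hx : ‖x1 - x2‖ ≤ ε / 4) : ‖y1 - y2‖ ≤ 2 * (c + 1) * ε := by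
  set d := y1 - y2 with hd
  by_cases hd0 : d = 0
  · rw [hd0]; simp; positivity
  have hdn : 0 < ‖d‖ := norm_pos_iff.2 hd0
  set w : Eu N := (ε / (2 * ‖d‖)) • d with hw
  have hwn : ‖w‖ = ε / 2 := by
    rw [hw, norm_smul, Real.norm_of_nonneg (by positivity)]; field_simp
  obtain ⟨p, hp, hpg⟩ := exists_good hε hb1 (x1 - w) (by simp [hwn])
  obtain ⟨p', hp', hpg'⟩ := exists_good hε hb2 (x2 + w) (by simp [hwn])
  have hpm : p ∈ ball (0 : Eu N) 2 := by
    rw [mem_ball_zero_iff]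
    have e : p = (p - (x1 - w)) + (x1 - w) := by abel
    rw [e]
    have := norm_add_le (p - (x1 - w)) (x1 - w)
    have := norm_sub_le x1 w
    linarith
  have hpm' : p' ∈ ball (0 : Eu N) 2 := by
    rw [mem_ball_zero_iff]
    have e : p' = (p' - (x2 + w)) + (x2 + w) := by abel
    rw [e]
    have := norm_add_le (p' - (x2 + w)) (x2 + w)
    have := norm_add_le x2 w
    linarith
  have h1 := hm2 p hpm
  have h2 := hm1 p' hpm'
  -- affine difference
  have haff : ∀ q : Eu N, ‖q - y1‖ ^ 2 - ‖q - y2‖ ^ 2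
      = -2 * inner ℝ q d + (‖y1‖ ^ 2 - ‖y2‖ ^ 2) := by
    intro q
    rw [norm_sub_sq_real, norm_sub_sq_real, hd, inner_sub_right]; ring
  have a1 := haff p
  have a2 := haff p'
  have h3 : inner ℝ (p' - p) d ≤ (c + 1) * ε ^ 2 := by
    rw [inner_sub_left]; linarith
  have h4 : inner ℝ ((2 : ℝ) • w) d = ε * ‖d‖ := by
    rw [hw, smul_smul, inner_smul_left, real_inner_self_eq_norm_sq]; simp; field_simp
  have h5 : inner ℝ (p' - p) d = ε * ‖d‖ + inner ℝ ((p' - (x2 + w)) - (p - (x1 - w)) - (x1 - x2)) d := by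
    rw [← h4, ← inner_add_left]; congr 1; rw [two_smul]; abel
  have h6 : ‖(p' - (x2 + w)) - (p - (x1 - w)) - (x1 - x2)‖ ≤ ε / 2 := by
    have i1 := norm_sub_le ((p' - (x2 + w)) - (p - (x1 - w))) (x1 - x2)
    have i2 := norm_sub_le (p' - (x2 + w)) (p - (x1 - w))
    linarith
  have h7 := abs_le.1 (abs_real_inner_le_norm ((p' - (x2 + w)) - (p - (x1 - w)) - (x1 - x2)) d)
  have h8 := mul_le_mul_of_nonneg_right h6 hdn.le
  have h9 : ε * ‖d‖ ≤ ε * (2 * (c + 1) * ε) := by nlinarith [h7.1]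
  exact le_of_mul_le_mul_left h9 hε


lemma slide (N : ℕ) (Λ β : ℝ) (hΛ : 1 ≤ Λ) (hβ : 0 < β) (hβ1 : β ≤ 1) :
    ∃ ε2 μ : ℝ, 0 < ε2 ∧ 0 < μ ∧ ∀ ε F : ℝ, ∀ v : Eu N → ℝ, 0 < ε → ε ≤ ε2 →
      SupSol N Λ β ε F 2 0 v → F ≤ 1 →
      (volume : Measure (Eu N)).real ({x | v x < 1} ∩ closedBall (0 : Eu N) 1) ≤ μ * om N →
      1 / 16 ≤ v 0 := by
  have hΛ0 : 0 < Λ := by linarith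
  set c := C2 N Λ β with hc
  have hc0 : 0 < c := by rw [hc, C2]; positivity
  set C3 : ℝ := 2 * (c + 1) with hC3
  have hC30 : 0 < C3 := by positivity
  set Q : ℝ := 2 * (32 * C3) ^ N with hQ
  have hQ0 : 0 < Q := by positivity
  refine ⟨min (1 / (4 * Λ)) (1 / (2 * (c + 1))), (1 / 4) ^ N / (2 * Q), by positivity,
    by positivity, ?_⟩
  intro ε F v hε hεs H hF hμ
  have hεΛ4 : ε * (4 * Λ) ≤ 1 := by
    have := hεs.trans (min_le_left _ _)
    rwa [le_div_iff₀ (by positivity)] at this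
  have hε4 : ε ≤ 1 / 4 := by nlinarith
  have hεΛ : ε * Λ ≤ 1 := by nlinarith
  have hεc : (c + 1) * ε ^ 2 ≤ 1 / 2 := by
    have := hεs.trans (min_le_right _ _)
    rw [le_div_iff₀ (by positivity)] at this
    nlinarith
  have hε16 : ε ^ 2 ≤ 1 / 16 := by nlinarith
  by_contra hv0
  push Not at hv0
  have hex : ∀ y : Eu N, ∃ x ∈ ball (0 : Eu N) 2,
      ∀ p ∈ ball (0 : Eu N) 2, v x + ‖x - y‖ ^ 2 - ε ^ 2 ≤ v p + ‖p - y‖ ^ 2 := by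
    intro y
    set S : Set ℝ := (fun x => v x + ‖x - y‖ ^ 2) '' ball (0 : Eu N) 2 with hS
    have hSb : BddBelow S := ⟨0, by
      rintro _ ⟨x, hx, rfl⟩
      have := H.nonneg x hx
      positivity⟩
    have hSn : S.Nonempty := ⟨_, 0, by simp, rfl⟩
    obtain ⟨_, ⟨x, hx, rfl⟩, hxm⟩ :=
      exists_lt_of_csInf_lt hSn (show sInf S < sInf S + ε ^ 2 by linarith [pow_pos hε 2])
    refine ⟨x, hx, fun p hp => ?_⟩
    have : sInf S ≤ v p + ‖p - y‖ ^ 2 := csInf_le hSb ⟨p, hp, rfl⟩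
    simp only at hxm
    linarith
  choose X hX2 hXm using hex
  have hX0 : ∀ y ∈ ball (0 : Eu N) (1 / 4), v (X y) + ‖X y - y‖ ^ 2 ≤ 3 / 16 := by
    intro y hy
    rw [mem_ball_zero_iff] at hy
    have h1 := hXm y 0 (by simp)
    rw [zero_sub, norm_neg] at h1
    have : ‖y‖ ^ 2 ≤ 1 / 16 := by nlinarith [norm_nonneg y]
    linarith
  have hXn : ∀ y ∈ ball (0 : Eu N) (1 / 4), ‖X y‖ < 3 / 4 := by
    intro y hy
    have h1 := hX0 y hy
    have h2 := H.nonneg _ (hX2 y)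
    rw [mem_ball_zero_iff] at hy
    have h3 : ‖X y - y‖ < 1 / 2 := by nlinarith [norm_nonneg (X y - y)]
    have := norm_add_le (X y - y) y
    rw [sub_add_cancel] at this
    linarith
  have hbad : ∀ y ∈ ball (0 : Eu N) (1 / 4),
      (volume : Measure (Eu N)).real (badSet N ε c v (X y) y) ≤ (ε / 32) ^ N * om N / 2 :=
    fun y hy => contact hΛ hβ hβ1 hε hεΛ H hF (X y) y (by linarith [hXn y hy]) (hXm y)
  obtain ⟨u, hut, hud, hucov⟩ := Vitali.exists_disjoint_subfamily_covering_enlargement_closedBall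
    (ball (0 : Eu N) (1 / 4)) X (fun _ => ε / 32) (ε / 32) (fun _ _ => le_rfl) 5 (by norm_num)
  have hcount : u.Countable := hud.countable_of_nonempty_interior fun j _ => by
    have : (ball (X j) (ε / 32)).Nonempty := nonempty_ball.2 (by positivity)
    exact this.mono ball_subset_interior_closedBall
  have hvm : MeasurableSet {x | v x < 1} := measurableSet_lt H.meas measurable_const
  have hcl1 : ∀ i ∈ u, closedBall (X i) (ε / 32) ⊆ closedBall (0 : Eu N) 1 := by
    intro i hi
    apply closedBall_subset_closedBall'
    have := hXn i (hut hi)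
    rw [dist_zero_right]; linarith
  have hmain := sum_lemma (N := N) hcount
    (D := fun i => closedBall i (C3 * ε))
    (S := fun i => {x | v x < 1} ∩ closedBall (X i) (ε / 32))
    (V := ball (0 : Eu N) (1 / 4)) (T := {x | v x < 1} ∩ closedBall (0 : Eu N) 1) (C := Q)
    (hud.mono (fun _ => Set.inter_subset_right))
    (fun i _ => hvm.inter measurableSet_closedBall)
    (by
      intro y hy
      obtain ⟨b, hb, hbs⟩ := hucov y hy
      have h1 : X y ∈ closedBall (X b) (5 * (ε / 32)) := hbs (mem_closedBall_self (by positivity))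
      rw [mem_closedBall_iff_norm] at h1
      simp only [Set.mem_iUnion, exists_prop]
      refine ⟨b, hb, ?_⟩
      rw [mem_closedBall_iff_norm]
      exact vertex_close hε (by linarith) (by linarith [hXn y hy]) (by linarith [hXn b (hut hb)])
        (hbad y hy) (hbad b (hut hb)) (hXm y) (hXm b) hc0.le (by linarith))
    (fun i hi => Set.inter_subset_inter_right _ (hcl1 i hi)) hQ0.le
    (by
      intro i hi
      rw [vr_cball _ _ (by positivity)]
      have hsub : closedBall (X i) (ε / 32) ⊆
          ({x | v x < 1} ∩ closedBall (X i) (ε / 32)) ∪ badSet N ε c v (X i) i := by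
        intro p hp
        by_cases hpb : p ∈ badSet N ε c v (X i) i
        · exact Or.inr hpb
        · left
          refine ⟨?_, hp⟩
          have hpb2 : p ∈ ball (X i) ε := by
            rw [mem_ball]; rw [mem_closedBall] at hp; linarith
          have h3 : v p + ‖p - i‖ ^ 2 < v (X i) + ‖X i - i‖ ^ 2 + c * ε ^ 2 := by
            by_contra hcc
            exact hpb ⟨hpb2, not_lt.1 hcc⟩
          have h4 := hX0 i (hut hi)
          have h5 := sq_nonneg ‖p - i‖
          have h6 := sq_nonneg ε
          change v p < 1
          linarith
      have hf1 : volume (({x | v x < 1} ∩ closedBall (X i) (ε / 32)) ∪ badSet N ε c v (X i) i) ≠ ∞ := by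
        refine ((measure_mono (t := closedBall (X i) ε) ?_).trans_lt measure_closedBall_lt_top).ne
        rintro p (hp | hp)
        · exact closedBall_subset_closedBall (by linarith) hp.2
        · exact ball_subset_closedBall hp.1
      have h1 := (measureReal_mono hsub hf1).trans (measureReal_union_le _ _)
      rw [vr_cball _ _ (by positivity)] at h1
      have h2 := hbad i (hut hi)
      have h3 : (ε / 32) ^ N * om N / 2 ≤
        (volume : Measure (Eu N)).real ({x | v x < 1} ∩ closedBall (X i) (ε / 32)) := by linarith
      calc (C3 * ε) ^ N * om N = Q * ((ε / 32) ^ N * om N / 2) := by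
            rw [hQ]; rw [show C3 * ε = (32 * C3) * (ε / 32) by ring, mul_pow (32 * C3)]; ring
        _ ≤ _ := mul_le_mul_of_nonneg_left h3 hQ0.le)
    (fun i _ => measure_closedBall_lt_top.ne)
    ((measure_mono Set.inter_subset_right).trans_lt measure_closedBall_lt_top).ne
  rw [vr_ball _ _ (by norm_num)] at hmain
  have h1 := mul_le_mul_of_nonneg_left hμ hQ0.le
  have h2 : Q * ((1 / 4) ^ N / (2 * Q) * om N) = (1 / 4) ^ N * om N / 2 := by field_simp
  have h3 : 0 < (1 / 4 : ℝ) ^ N * om N := mul_pos (by positivity) (om_pos N)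
  linarith

lemma growth1 (N : ℕ) (Λ β : ℝ) (hΛ : 1 ≤ Λ) (hβ : 0 < β) (hβ1 : β ≤ 1) :
    ∃ ε3 μ c τ : ℝ, 0 < ε3 ∧ 0 < μ ∧ μ < 1 ∧ 0 < c ∧ c < 1 ∧ 0 < τ ∧
      ∀ ε F : ℝ, ∀ v : Eu N → ℝ, 0 < ε → ε ≤ ε3 →
      SupSol N Λ β ε F 3 0 v → 0 ≤ F → F ≤ τ →
      (volume : Measure (Eu N)).real ({x | v x < 1} ∩ closedBall (0 : Eu N) 1) ≤ μ * om N →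
      ∀ x ∈ closedBall (0 : Eu N) 1, c ≤ v x := by
  obtain ⟨ε1, c, τ, hε1, hc, hτ, hexp⟩ := expand N Λ β hΛ hβ hβ1
  obtain ⟨ε2, μ, hε2, hμ, hsl⟩ := slide N Λ β hΛ hβ hβ1
  refine ⟨min ε1 (ε2 / 2), min (μ * (1 / 2) ^ N) (1 / 2), min (c / 16) (1 / 2), min (τ / 16) 1,
    by positivity, by positivity, by linarith [min_le_right (μ * (1 / 2) ^ N) (1 / 2)],
    by positivity, by linarith [min_le_right (c / 16) (1 / 2)], by positivity, ?_⟩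
  intro ε F v hε hε3 H hF0 hF hm
  have hF1 : F ≤ 1 := hF.trans (min_le_right _ _)
  have step1 : ∀ x0 ∈ closedBall (0 : Eu N) (1 / 2), 1 / 16 ≤ v x0 := by
    intro x0 hx0
    rw [mem_closedBall_zero_iff] at hx0
    have H' := H.scale x0 (r := 1 / 2) (h := 1) (K' := 2) (by norm_num) one_pos
      (by rw [dist_zero_right]; linarith)
    have := hsl _ _ _ (by positivity) (by
      have := hε3.trans (min_le_right _ _)
      linarith) H' (by linarith) (by
      have hpre := vr_preimage x0 (ε := 1 / 2) (by norm_num)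
        ({x | v x < 1} ∩ closedBall x0 (1 / 2))
      have hset : (fun y => x0 + (1 / 2 : ℝ) • y) ⁻¹' ({x | v x < 1} ∩ closedBall x0 (1 / 2))
          = {x | 1 * v (x0 + (1 / 2 : ℝ) • x) < 1} ∩ closedBall (0 : Eu N) 1 := by
        ext y
        simp only [Set.mem_preimage, Set.mem_inter_iff, Set.mem_ofPred_eq, one_mul,
          mem_closedBall_iff_norm, add_sub_cancel_left, norm_smul, sub_zero]
        norm_num
      rw [hset] at hpre
      have h1 : (volume : Measure (Eu N)).real ({x | v x < 1} ∩ closedBall x0 (1 / 2)) ≤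
          (volume : Measure (Eu N)).real ({x | v x < 1} ∩ closedBall (0 : Eu N) 1) := by
        refine measureReal_mono (Set.inter_subset_inter_right _ ?_)
          ((measure_mono Set.inter_subset_right).trans_lt measure_closedBall_lt_top).ne
        apply closedBall_subset_closedBall'
        rw [dist_zero_right]; linarith
      have h2 : min (μ * (1 / 2) ^ N) (1 / 2) * om N ≤ μ * (1 / 2) ^ N * om N :=
        mul_le_mul_of_nonneg_right (min_le_left _ _) (om_pos N).le
      have h3 : (0 : ℝ) < (1 / 2) ^ N := by positivity
      refine le_of_mul_le_mul_left ?_ h3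
      rw [hpre]
      linarith)
    simpa using this
  have H' := H.scale 0 (r := 1) (h := 16) (K' := 3) (by norm_num) (by norm_num)
      (by simp)
  intro x hx
  have := hexp _ _ _ (by positivity) (by rw [div_one]; exact hε3.trans (min_le_left _ _)) H' (by
    have := hF.trans (min_le_left _ _)
    linarith) (by
    intro y hy
    have := step1 y hy
    simp only [one_smul, zero_add]
    linarith) x hx
  simp only [one_smul, zero_add] at this
  have := min_le_left (c / 16) (1 / 2)
  linarith

/-- Scaled growth lemma. -/
lemma growth (N : ℕ) (Λ β : ℝ) (hΛ : 1 ≤ Λ) (hβ : 0 < β) (hβ1 : β ≤ 1) :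
    ∃ ε3 μ c τ : ℝ, 0 < ε3 ∧ 0 < μ ∧ μ < 1 ∧ 0 < c ∧ c < 1 ∧ 0 < τ ∧
      ∀ ε F K r h : ℝ, ∀ p : Eu N, ∀ v : Eu N → ℝ, 0 < ε → 0 < r → ε ≤ ε3 * r → 0 < h →
      SupSol N Λ β ε F K 0 v → ‖p‖ + 3 * r ≤ K → 0 ≤ F → r ^ 2 * F ≤ τ * h →
      (volume : Measure (Eu N)).real ({x | v x < h} ∩ closedBall p r)
        ≤ μ * (volume : Measure (Eu N)).real (closedBall p r) →
      ∀ x ∈ closedBall p r, c * h ≤ v x := by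
  obtain ⟨ε3, μ, c, τ, h1, h2, h3, h4, h5, h6, hg⟩ := growth1 N Λ β hΛ hβ hβ1
  refine ⟨ε3, μ, c, τ, h1, h2, h3, h4, h5, h6, ?_⟩
  intro ε F K r h p v hε hr hεr hh H hK hF hrF hm x hx
  have H' := H.scale p (r := r) (h := 1 / h) (K' := 3) hr (by positivity)
      (by rw [dist_zero_right]; linarith)
  have hres := hg _ _ _ (by positivity) (by rw [div_le_iff₀ hr]; exact hεr) H' (by positivity)
    (by rw [mul_one_div, div_le_iff₀ hh]; exact hrF) (by
      have hpre := vr_preimage p hr ({x | v x < h} ∩ closedBall p r)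
      have hset : (fun y => p + r • y) ⁻¹' ({x | v x < h} ∩ closedBall p r)
          = {x | 1 / h * v (p + r • x) < 1} ∩ closedBall (0 : Eu N) 1 := by
        ext y
        simp only [Set.mem_preimage, Set.mem_inter_iff, Set.mem_ofPred_eq,
          mem_closedBall_iff_norm, add_sub_cancel_left, norm_smul, sub_zero,
          Real.norm_of_nonneg hr.le, mul_le_iff_le_one_right hr]
        rw [one_div_mul_eq_div, div_lt_one hh]
      rw [hset] at hpre
      rw [vr_cball _ _ hr.le, ← hpre] at hm
      refine le_of_mul_le_mul_left ?_ (pow_pos hr N)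
      linarith)
    (r⁻¹ • (x - p)) (by
      rw [mem_closedBall_iff_norm] at hx
      rw [mem_closedBall_zero_iff, norm_smul, norm_inv, Real.norm_of_nonneg hr.le,
        inv_mul_le_one₀ hr]
      exact hx)
  simp only [smul_inv_smul₀ hr.ne', add_sub_cancel] at hres
  rw [one_div_mul_eq_div, le_div_iff₀ hh] at hres
  exact hres


lemma onestep {N : ℕ} {Λ β F K : ℝ} {v : Eu N → ℝ} (hΛ : 1 ≤ Λ) (hβ : 0 < β)
    (H : SupSol N Λ β 1 F K 0 v) {x : Eu N} (hx : ‖x‖ + Λ ≤ K) {A : Set (Eu N)}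
    (hA : MeasurableSet A) (hAs : A ⊆ ball x 1) {h : ℝ} (hh : ∀ p ∈ A, h ≤ v p) :
    β * (h * (volume : Measure (Eu N)).real A) ≤ om N * (v x + F) := by
  have hmem : ∀ p ∈ ball x Λ, 0 ≤ v p := by
    intro p hp
    apply H.nonneg
    rw [mem_ball_iff_norm] at hp
    rw [mem_ball_zero_iff]
    have := norm_add_le (p - x) x
    rw [sub_add_cancel] at this
    linarith
  have hl := H.ineq x (by rw [mem_ball_zero_iff]; linarith) (-2 * v x) (by
    intro z hz
    rw [mem_ball_zero_iff] at hz
    have h1 := hmem (x + (1 : ℝ) • z) (by rw [mem_ball_iff_norm]; simpa using hz)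
    have h2 := hmem (x - (1 : ℝ) • z) (by rw [mem_ball_iff_norm]; simpa using hz)
    simp only [secondDiff]
    linarith)
  rw [avg_sd H.meas H.bdd] at hl
  have hav := avg_lower H.meas H.bdd x one_pos hA hAs
    (fun p hp => hmem p (ball_subset_ball hΛ hp)) hh
  set D := ⨍ y in ball (0 : Eu N) 1, v (x + (1 : ℝ) • y)
  have h1 : β * D ≤ v x + F := by linarith
  have h2 := mul_le_mul_of_nonneg_left h1 (om_pos N).le
  have h3 := mul_le_mul_of_nonneg_left hav hβ.le
  simp only [one_pow, one_mul] at h3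
  linarith

lemma spread {N : ℕ} {Λ β F K : ℝ} {v : Eu N → ℝ} (hΛ : 1 ≤ Λ) (hβ : 0 < β) (hβ1 : β ≤ 1)
    (H : SupSol N Λ β 1 F K 0 v) {p : Eu N} {h : ℝ} (hh : 0 < h) (T : ℕ)
    (hK : ‖p‖ + 1 / 2 + T / 2 + Λ ≤ K) (hF : F ≤ (β * (1 / 4) ^ N / 2) ^ T * h)
    (hv : ∀ x ∈ ball p (1 / 2), h ≤ v x) :
    ∀ j : ℕ, j ≤ T → ∀ x ∈ ball p (1 / 2 + j / 2), (β * (1 / 4) ^ N / 2) ^ j * h ≤ v x := by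
  set q : ℝ := β * (1 / 4) ^ N / 2 with hq
  have hq0 : 0 < q := by positivity
  have hq1 : q ≤ 1 := by
    have : (1 / 4 : ℝ) ^ N ≤ 1 := pow_le_one₀ (by norm_num) (by norm_num)
    have : β * (1 / 4 : ℝ) ^ N ≤ 1 * 1 := mul_le_mul hβ1 this (by positivity) (by norm_num)
    rw [hq]; linarith
  intro j
  induction j with
  | zero => intro _ x hx; simpa using hv x (by simpa using hx)
  | succ j ih =>
    intro hj x hx
    have ih := ih (by omega)
    have hqj : 0 < q ^ j * h := by positivity
    push_cast at hx
    rw [mem_ball_iff_norm] at hx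
    set d := ‖x - p‖ with hd
    by_cases hdj : d < 1 / 2 + j / 2
    · refine le_trans ?_ (ih x (by rw [mem_ball_iff_norm]; exact hdj))
      rw [pow_succ]
      nlinarith
    push Not at hdj
    have hj0 : (0 : ℝ) ≤ j := by positivity
    have hdpos : 0 < d := by linarith
    have hjT : ((j : ℝ) + 1) ≤ T := by exact_mod_cast hj
    set s : ℝ := 3 / (4 * d) with hs
    have hsd : s * d = 3 / 4 := by rw [hs]; field_simp
    set w : Eu N := x - s • (x - p) with hw
    have hwx : ‖w - x‖ = 3 / 4 := by
      rw [hw, sub_sub_cancel_left, norm_neg, norm_smul, Real.norm_of_nonneg (by positivity), ← hd, hsd]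
    have hwp : ‖w - p‖ ≤ 1 / 4 + j / 2 := by
      have e : w - p = (1 - s) • (x - p) := by rw [hw, sub_smul, one_smul]; abel
      rw [e, norm_smul, ← hd, Real.norm_eq_abs, ← abs_of_pos hdpos, ← abs_mul,
        sub_mul, hsd, one_mul, abs_le]
      constructor <;> linarith
    have hone := onestep hΛ hβ H (x := x) (by
        have := norm_add_le (x - p) p
        rw [sub_add_cancel] at this
        linarith) (A := ball w (1 / 4)) measurableSet_ball (by
        apply ball_subset_ball'
        rw [dist_eq_norm, hwx]; norm_num) (h := q ^ j * h) (by
        intro y hy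
        apply ih
        rw [mem_ball_iff_norm] at *
        have := norm_add_le (y - w) (w - p)
        rw [sub_add_sub_cancel] at this
        linarith)
    rw [vr_ball _ _ (by norm_num)] at hone
    have h1 : om N * (2 * q ^ (j + 1) * h) ≤ om N * (v x + F) := by
      refine le_trans (le_of_eq ?_) hone
      rw [pow_succ]
      conv_lhs => rw [hq]
      rw [← hq]; ring
    have h2 := le_of_mul_le_mul_left h1 (om_pos N)
    have h3 : q ^ T ≤ q ^ (j + 1) := pow_le_pow_of_le_one hq0.le hq1 hj
    have h4 := mul_le_mul_of_nonneg_right h3 hh.le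
    linarith

lemma micro1 (N : ℕ) (Λ β : ℝ) (hΛ : 1 ≤ Λ) (hβ : 0 < β) (hβ1 : β ≤ 1) (n : ℝ) (hn : Λ ≤ n)
    (ρ : ℝ) (hρ : 0 < ρ) :
    ∃ c τ : ℝ, 0 < c ∧ 0 < τ ∧ ∀ F : ℝ, ∀ v : Eu N → ℝ, SupSol N Λ β 1 F (20 * n) 0 v → F ≤ τ →
      ρ * om N ≤ (volume : Measure (Eu N)).real ({x | 1 ≤ v x} ∩ closedBall (0 : Eu N) (5 * n)) →
      ∀ x ∈ closedBall (0 : Eu N) n, c ≤ v x := by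
  have hn1 : 1 ≤ n := hΛ.trans hn
  obtain ⟨t, hts, htf, htc⟩ := (isCompact_closedBall (0 : Eu N) (5 * n)).finite_cover_balls
    (show (0 : ℝ) < 1 / 2 by norm_num)
  lift t to Finset (Eu N) using htf
  set q : ℝ := β * (1 / 4) ^ N / 2 with hq
  have hq0 : 0 < q := by positivity
  have hom := om_pos N
  set h1 : ℝ := β * ρ / (2 * (t.card + 1)) with hh1
  have hh10 : 0 < h1 := by positivity
  set T : ℕ := ⌈12 * n + 4⌉₊ with hT
  have hT1 : 12 * n + 4 ≤ T := Nat.le_ceil _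
  have hT2 : (T : ℝ) < 12 * n + 4 + 1 := Nat.ceil_lt_add_one (by linarith)
  refine ⟨q ^ T * h1, min h1 (q ^ T * h1), by positivity, by positivity, ?_⟩
  intro F v H hF hm
  have hF1 := hF.trans (min_le_left _ _)
  have hF2 := hF.trans (min_le_right _ _)
  have hvm : MeasurableSet {x | 1 ≤ v x} := measurableSet_le measurable_const H.meas
  obtain ⟨p, hpt, hpm⟩ : ∃ p ∈ t, ρ * om N / (t.card + 1) ≤
      (volume : Measure (Eu N)).real ({x | 1 ≤ v x} ∩ ball p (1 / 2)) := by
    by_contra hcon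
    push Not at hcon
    have hsub : {x | 1 ≤ v x} ∩ closedBall (0 : Eu N) (5 * n) ⊆
        ⋃ p ∈ t, ({x | 1 ≤ v x} ∩ ball p (1 / 2)) := by
      intro y hy
      have := htc hy.2
      simp only [Set.mem_iUnion, exists_prop] at this ⊢
      obtain ⟨i, hi, hyi⟩ := this
      exact ⟨i, hi, hy.1, hyi⟩
    have hfin : volume (⋃ p ∈ t, ({x | 1 ≤ v x} ∩ ball p (1 / 2))) ≠ ∞ := by
      refine ((measure_biUnion_finset_le t _).trans_lt ?_).ne
      refine ENNReal.sum_lt_top.2 fun i _ => ?_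
      exact (measure_mono Set.inter_subset_right).trans_lt measure_ball_lt_top
    have h2 := (measureReal_mono hsub hfin).trans (measureReal_biUnion_finset_le t _)
    have h3 : ∑ p ∈ t, (volume : Measure (Eu N)).real ({x | 1 ≤ v x} ∩ ball p (1 / 2))
        ≤ ∑ p ∈ t, ρ * om N / (t.card + 1) := Finset.sum_le_sum fun i hi => (hcon i hi).le
    rw [Finset.sum_const, nsmul_eq_mul] at h3
    have h4 : (t.card : ℝ) * (ρ * om N / (t.card + 1)) < ρ * om N := by
      rw [← mul_div_assoc, div_lt_iff₀ (by positivity)]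
      have : 0 < ρ * om N := by positivity
      nlinarith
    linarith
  have hpn : ‖p‖ ≤ 5 * n := by simpa using hts hpt
  have hstart : ∀ x ∈ ball p (1 / 2), h1 ≤ v x := by
    intro x hx
    have hxp := mem_ball_iff_norm.1 hx
    have hone := onestep hΛ hβ H (x := x) (by
        have := norm_add_le (x - p) p
        rw [sub_add_cancel] at this
        linarith) (A := {x | 1 ≤ v x} ∩ ball p (1 / 2)) (hvm.inter measurableSet_ball) (by
        refine Set.inter_subset_right.trans ?_
        apply ball_subset_ball'
        rw [dist_comm]
        rw [mem_ball] at hx; linarith) (h := 1) (fun y hy => hy.1)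
    have h2 := mul_le_mul_of_nonneg_left hpm hβ.le
    have h3 : om N * (2 * h1) ≤ om N * (v x + F) := by
      refine le_trans (le_of_eq ?_) (h2.trans (by linarith))
      rw [hh1]; field_simp
    have h4 := le_of_mul_le_mul_left h3 hom
    linarith
  have hsp := spread hΛ hβ hβ1 H hh10 T (by linarith) hF2 hstart T le_rfl
  intro x hx
  apply hsp
  rw [mem_closedBall_zero_iff] at hx
  rw [mem_ball_iff_norm]
  have := norm_sub_le x p
  linarith

lemma micro (N : ℕ) (Λ β : ℝ) (hΛ : 1 ≤ Λ) (hβ : 0 < β) (hβ1 : β ≤ 1) (n : ℝ) (hn : Λ ≤ n)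
    (ρ : ℝ) (hρ : 0 < ρ) :
    ∃ c τ : ℝ, 0 < c ∧ 0 < τ ∧ ∀ ε F K : ℝ, ∀ p : Eu N, ∀ v : Eu N → ℝ, 0 < ε →
      SupSol N Λ β ε F K 0 v → ‖p‖ + 20 * (n * ε) ≤ K → ε ^ 2 * F ≤ τ →
      ρ * (volume : Measure (Eu N)).real (closedBall p (n * ε)) ≤
        (volume : Measure (Eu N)).real ({x | 1 ≤ v x} ∩ closedBall p (5 * (n * ε))) →
      ∀ x ∈ closedBall p (n * ε), c ≤ v x := by
  have hn1 : 1 ≤ n := hΛ.trans hn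
  obtain ⟨c, τ, hc, hτ, hm⟩ := micro1 N Λ β hΛ hβ hβ1 n hn (ρ * n ^ N) (by positivity)
  refine ⟨c, τ, hc, hτ, ?_⟩
  intro ε F K p v hε H hK hF hd x hx
  have H' := H.scale p (r := ε) (h := 1) (K' := 20 * n) hε one_pos
      (by rw [dist_zero_right]; linarith)
  rw [div_self hε.ne'] at H'
  have hres := hm _ _ H' (by rw [mul_one]; exact hF) (by
      have hpre := vr_preimage p hε ({x | 1 ≤ v x} ∩ closedBall p (5 * (n * ε)))
      have hset : (fun y => p + ε • y) ⁻¹' ({x | 1 ≤ v x} ∩ closedBall p (5 * (n * ε)))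
          = {x | 1 ≤ 1 * v (p + ε • x)} ∩ closedBall (0 : Eu N) (5 * n) := by
        ext y
        have : 5 * (n * ε) = ε * (5 * n) := by ring
        simp only [Set.mem_preimage, Set.mem_inter_iff, Set.mem_ofPred_eq, one_mul,
          mem_closedBall_iff_norm, add_sub_cancel_left, norm_smul, sub_zero,
          Real.norm_of_nonneg hε.le, this, mul_le_mul_iff_right₀ hε]
      rw [hset] at hpre
      rw [vr_cball _ _ (by positivity), ← hpre, mul_pow] at hd
      refine le_of_mul_le_mul_left ?_ (pow_pos hε N)
      linarith)
    (ε⁻¹ • (x - p)) (by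
      rw [mem_closedBall_iff_norm] at hx
      rw [mem_closedBall_zero_iff, norm_smul, norm_inv, Real.norm_of_nonneg hε.le,
        inv_mul_le_iff₀ hε]
      linarith)
  simpa only [smul_inv_smul₀ hε.ne', add_sub_cancel, one_mul] using hres


lemma grow_ball {N : ℕ} {E : Set (Eu N)} {μ R s : ℝ} {p : Eu N} (hs : 0 < s)
    (hps : ‖p‖ + s ≤ R) (hsub : closedBall p s ⊆ E) (hμ : 0 ≤ μ)
    (hvol : μ * (volume : Measure (Eu N)).real (closedBall 0 R) ≤
      (volume : Measure (Eu N)).real (closedBall 0 R \ E)) :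
    ∃ (p' : Eu N) (s' : ℝ), s ≤ s' ∧ ‖p'‖ + s' ≤ R ∧ closedBall p s ⊆ closedBall p' s' ∧
      (volume : Measure (Eu N)).real (closedBall p' s' \ E) =
        μ * (volume : Measure (Eu N)).real (closedBall p' s') := by
  have hnp := norm_nonneg p
  set r : ℝ → ℝ := fun t => (1 - t) * s + t * R with hr
  set B : ℝ → Set (Eu N) := fun t => closedBall ((1 - t) • p) (r t) with hB
  have hmono : ∀ a b : ℝ, a ≤ b → B a ⊆ B b := by
    intro a b hab
    apply closedBall_subset_closedBall'
    rw [dist_eq_norm, ← sub_smul, norm_smul, Real.norm_eq_abs, hr]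
    have : |1 - a - (1 - b)| = b - a := by rw [abs_of_nonneg (by linarith)]; ring
    rw [this]
    simp only
    nlinarith
  have hrp : ∀ t ∈ Set.Icc (0 : ℝ) 1, 0 ≤ r t := by
    intro t ht
    have h1 := ht.1
    have h2 := ht.2
    have : 0 ≤ 1 - t := by linarith
    have : 0 ≤ R := by linarith
    simp only [hr]
    positivity
  set f : ℝ → ℝ := fun t => (volume : Measure (Eu N)).real (B t \ E) with hf
  set g : ℝ → ℝ := fun t => (volume : Measure (Eu N)).real (B t) with hg
  have hgc : ContinuousOn g (Set.Icc 0 1) := by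
    have h1 : ContinuousOn (fun t => (r t) ^ N * om N) (Set.Icc 0 1) := by
      rw [hr]; fun_prop
    refine h1.congr fun t ht => ?_
    simp only [hg, hB]
    exact vr_cball N _ (hrp t ht)
  have hBf : ∀ t, volume (B t) ≠ ∞ := fun t => measure_closedBall_lt_top.ne
  have hdiff : ∀ a b : ℝ, a ≤ b → |f b - f a| ≤ |g b - g a| := by
    intro a b hab
    have h1 : f a ≤ f b := measureReal_mono (Set.sdiff_subset_sdiff_left (hmono a b hab))
      ((measure_mono Set.sdiff_subset).trans_lt (hBf b).lt_top).ne
    have h2 : f b ≤ f a + (g b - g a) := by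
      have e : g b - g a = (volume : Measure (Eu N)).real (B b \ B a) :=
        (measureReal_sdiff (hmono a b hab) measurableSet_closedBall (hBf b)).symm
      rw [e]
      refine le_trans (measureReal_mono (s₂ := (B a \ E) ∪ (B b \ B a)) ?_ ?_)
        (measureReal_union_le _ _)
      · intro x hx
        by_cases hxa : x ∈ B a
        · exact Or.inl ⟨hxa, hx.2⟩
        · exact Or.inr ⟨hx.1, hxa⟩
      · refine ((measure_mono (Set.union_subset ?_ ?_)).trans_lt (hBf b).lt_top).ne
        · exact Set.sdiff_subset.trans (hmono a b hab)
        · exact Set.sdiff_subset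
    rw [abs_of_nonneg (by linarith)]
    exact le_trans (by linarith) (le_abs_self _)
  have hdiff' : ∀ a b : ℝ, |f b - f a| ≤ |g b - g a| := by
    intro a b
    rcases le_total a b with h | h
    · exact hdiff a b h
    · rw [abs_sub_comm, abs_sub_comm (g b)]; exact hdiff b a h
  have hfc : ContinuousOn f (Set.Icc 0 1) := by
    rw [Metric.continuousOn_iff] at hgc ⊢
    intro b hb e he
    obtain ⟨δ, hδ, h⟩ := hgc b hb e he
    refine ⟨δ, hδ, fun a ha hab => ?_⟩
    have := h a ha hab
    rw [Real.dist_eq] at this ⊢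
    exact (hdiff' _ _).trans_lt this
  have hφ : ContinuousOn (fun t => f t - μ * g t) (Set.Icc 0 1) := hfc.sub (hgc.const_mul μ)
  have h0 : f 0 - μ * g 0 ≤ 0 := by
    have : f 0 = 0 := by
      simp only [hf, hB, hr]
      simp [Set.sdiff_eq_empty.2 hsub]
    rw [this]
    have : 0 ≤ g 0 := measureReal_nonneg
    nlinarith
  have h1 : 0 ≤ f 1 - μ * g 1 := by
    simp only [hf, hg, hB, hr]
    simp only [sub_self, zero_smul, zero_mul, one_mul, zero_add]
    linarith
  obtain ⟨t, ht, hteq⟩ := intermediate_value_Icc zero_le_one hφ ⟨h0, h1⟩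
  refine ⟨(1 - t) • p, r t, ?_, ?_, ?_, ?_⟩
  · simp only [hr]; nlinarith [ht.1, ht.2]
  · rw [norm_smul, Real.norm_of_nonneg (by linarith [ht.2])]
    simp only [hr]; nlinarith [ht.1, ht.2]
  · have := hmono 0 t ht.1
    simpa [hB, hr] using this
  · simp only at hteq
    have : f t = μ * g t := by linarith
    exact this

structure Ink (N : ℕ) (s0 R : ℝ) (E : Set (Eu N)) : Prop where
  meas : MeasurableSet E
  cov : ∀ x ∈ E, ∃ (p : Eu N) (s : ℝ), s0 ≤ s ∧ ‖p‖ + s ≤ R ∧ x ∈ closedBall p s ∧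
    closedBall p s ⊆ E

lemma Ink.sub {N : ℕ} {s0 R : ℝ} {E : Set (Eu N)} (h : Ink N s0 R E) :
    E ⊆ closedBall 0 R := by
  intro x hx
  obtain ⟨p, s, -, h1, h2, -⟩ := h.cov x hx
  refine closedBall_subset_closedBall' ?_ h2
  rw [dist_zero_right]; linarith

lemma ink_step {N : ℕ} {s0 R μ : ℝ} {E : Set (Eu N)} (hs0 : 0 < s0) (hμ : 0 < μ)
    (hI : Ink N s0 R E)
    (hvol : μ * (volume : Measure (Eu N)).real (closedBall 0 R) ≤
      (volume : Measure (Eu N)).real (closedBall 0 R \ E)) :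
    ∃ E', Ink N s0 R E' ∧ (1 + μ / 5 ^ N) * (volume : Measure (Eu N)).real E ≤
        (volume : Measure (Eu N)).real E' ∧
      ∀ x ∈ E', x ∈ E ∨ ∃ (p : Eu N) (s : ℝ), s0 ≤ s ∧ ‖p‖ + s ≤ R ∧ x ∈ closedBall p s ∧
        (volume : Measure (Eu N)).real (closedBall p s \ E) =
          μ * (volume : Measure (Eu N)).real (closedBall p s) := by
  have hex : ∀ x, ∃ (p : Eu N) (s : ℝ), x ∈ E → (s0 ≤ s ∧ ‖p‖ + s ≤ R ∧ x ∈ closedBall p s ∧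
        (volume : Measure (Eu N)).real (closedBall p s \ E) =
          μ * (volume : Measure (Eu N)).real (closedBall p s)) := by
    intro x
    by_cases hx : x ∈ E
    · obtain ⟨p, s, h1, h2, h3, h4⟩ := hI.cov x hx
      obtain ⟨p', s', g1, g2, g3, g4⟩ := grow_ball (hs0.trans_le h1) h2 h4 hμ.le hvol
      exact ⟨p', s', fun _ => ⟨h1.trans g1, g2, g3 h3, g4⟩⟩
    · exact ⟨0, 0, fun h => absurd h hx⟩
  choose P S hPS using hex
  obtain ⟨u, hut, hud, hucov⟩ := Vitali.exists_disjoint_subfamily_covering_enlargement_closedBall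
    E P S R (fun a ha => by
      have := (hPS a ha).2.1
      linarith [norm_nonneg (P a)]) 5 (by norm_num)
  have hcount : u.Countable := hud.countable_of_nonempty_interior fun j hj => by
    have : (ball (P j) (S j)).Nonempty := nonempty_ball.2 (hs0.trans_le (hPS j (hut hj)).1)
    exact this.mono ball_subset_interior_closedBall
  set U : Set (Eu N) := ⋃ i ∈ u, closedBall (P i) (S i) with hU
  have hUm : MeasurableSet U := MeasurableSet.biUnion hcount fun _ _ => measurableSet_closedBall
  have hink : Ink N s0 R (E ∪ U) := by
    refine ⟨hI.meas.union hUm, ?_⟩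
    rintro x (hx | hx)
    · obtain ⟨p, s, h1, h2, h3, h4⟩ := hI.cov x hx
      exact ⟨p, s, h1, h2, h3, h4.trans Set.subset_union_left⟩
    · rw [hU, Set.mem_iUnion₂] at hx
      obtain ⟨i, hi, hxi⟩ := hx
      obtain ⟨h1, h2, -, -⟩ := hPS i (hut hi)
      refine ⟨P i, S i, h1, h2, hxi, ?_⟩
      refine Set.Subset.trans ?_ Set.subset_union_right
      exact Set.subset_biUnion_of_mem (u := fun i => closedBall (P i) (S i)) hi
  have hfin : volume (E ∪ U) ≠ ∞ :=
    ((measure_mono hink.sub).trans_lt measure_closedBall_lt_top).ne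
  refine ⟨E ∪ U, hink, ?_, ?_⟩
  · have hTf : volume ((E ∪ U) \ E) ≠ ∞ := ((measure_mono Set.sdiff_subset).trans_lt hfin.lt_top).ne
    have key := sum_lemma hcount (D := fun i => closedBall (P i) (5 * S i))
      (S := fun i => closedBall (P i) (S i) \ E) (V := E) (T := (E ∪ U) \ E) (C := 5 ^ N / μ)
      (hud.mono fun i => Set.sdiff_subset) (fun i _ => measurableSet_closedBall.diff hI.meas)
      (by
        intro x hx
        obtain ⟨b, hb, h⟩ := hucov x hx
        rw [Set.mem_iUnion₂]
        exact ⟨b, hb, h (hPS x hx).2.2.1⟩)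
      (by
        intro i hi
        refine Set.sdiff_subset_sdiff_left (Set.Subset.trans ?_ Set.subset_union_right)
        exact Set.subset_biUnion_of_mem (u := fun i => closedBall (P i) (S i)) hi)
      (by positivity)
      (by
        intro i hi
        obtain ⟨h1, -, -, h4⟩ := hPS i (hut hi)
        have hp := hs0.trans_le h1
        rw [h4, vr_cball _ _ hp.le, vr_cball _ _ (by positivity), mul_pow]
        apply le_of_eq
        field_simp)
      (fun i _ => measure_closedBall_lt_top.ne) hTf
    have e : (volume : Measure (Eu N)).real ((E ∪ U) \ E) =
        (volume : Measure (Eu N)).real (E ∪ U) - (volume : Measure (Eu N)).real E :=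
      measureReal_sdiff Set.subset_union_left hI.meas hfin
    rw [e] at key
    have h5 : (0 : ℝ) < 5 ^ N := by positivity
    have : μ / 5 ^ N * (volume : Measure (Eu N)).real E ≤
        (volume : Measure (Eu N)).real (E ∪ U) - (volume : Measure (Eu N)).real E := by
      rw [div_mul_eq_mul_div, div_le_iff₀ h5]
      rw [div_mul_eq_mul_div, le_div_iff₀ hμ] at key
      linarith
    linarith
  · rintro x (hx | hx)
    · exact Or.inl hx
    · rw [hU, Set.mem_iUnion₂] at hx
      obtain ⟨i, hi, hxi⟩ := hx
      obtain ⟨h1, h2, -, h4⟩ := hPS i (hut hi)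
      exact Or.inr ⟨P i, S i, h1, h2, hxi, h4⟩

lemma ink_final {N : ℕ} {Λ β ε3 μ c τ : ℝ} (hμ : 0 < μ) (hc : 0 < c) (hc1 : c < 1)
    (hg : ∀ (ε F K r h : ℝ) (p : Eu N) (v : Eu N → ℝ), 0 < ε → 0 < r → ε ≤ ε3 * r → 0 < h →
      SupSol N Λ β ε F K 0 v → ‖p‖ + 3 * r ≤ K → 0 ≤ F → r ^ 2 * F ≤ τ * h →
      (volume : Measure (Eu N)).real ({x | v x < h} ∩ closedBall p r) ≤
        μ * (volume : Measure (Eu N)).real (closedBall p r) →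
      ∀ x ∈ closedBall p r, c * h ≤ v x)
    {ε F K s0 R : ℝ} {v : Eu N → ℝ} (hε : 0 < ε) (hs0 : 0 < s0) (hR : s0 ≤ R)
    (hε3 : ∀ s, s0 ≤ s → ε ≤ ε3 * s) (H : SupSol N Λ β ε F K 0 v) (hK : 3 * R ≤ K) (hF : 0 ≤ F)
    (hτ : 0 < τ) (J : ℕ) : ∀ (h : ℝ) (E : Set (Eu N)), 0 < h → Ink N s0 R E → (∀ x ∈ E, h ≤ v x) →
      R ^ 2 * F ≤ τ * (c ^ J * h) →
      (volume : Measure (Eu N)).real (closedBall (0 : Eu N) R) <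
        (1 + μ / 5 ^ N) ^ J * (volume : Measure (Eu N)).real E →
      ∀ x ∈ closedBall (0 : Eu N) R, c ^ (J + 1) * h ≤ v x := by
  have hR0 : 0 < R := hs0.trans_le hR
  induction J with
  | zero =>
    intro h E hh hI hv hF1 hvol
    exfalso
    rw [pow_zero, one_mul] at hvol
    exact absurd (measureReal_mono hI.sub measure_closedBall_lt_top.ne) (not_le.2 hvol)
  | succ J ih =>
    intro h E hh hI hv hF1 hvol x hx
    have hcJ : c ^ (J + 1) ≤ 1 := pow_le_one₀ hc.le hc1.le
    have hF2 : R ^ 2 * F ≤ τ * h := by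
      refine hF1.trans ?_
      have : c ^ (J + 1) * h ≤ h := by nlinarith
      exact mul_le_mul_of_nonneg_left this hτ.le
    by_cases hb : μ * (volume : Measure (Eu N)).real (closedBall 0 R) ≤
      (volume : Measure (Eu N)).real (closedBall 0 R \ E)
    · obtain ⟨E', hI', hvol', hE'⟩ := ink_step hs0 hμ hI hb
      have := ih (c * h) E' (by positivity) hI' (by
        intro y hy
        rcases hE' y hy with hy | ⟨p, s, h1, h2, h3, h4⟩
        · have := hv y hy
          nlinarith
        · have hs : 0 < s := hs0.trans_le h1
          have hsR : s ≤ R := by linarith [norm_nonneg p]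
          refine hg ε F K s h p v hε hs (hε3 s h1) hh H (by linarith) hF ?_ ?_ y h3
          · refine le_trans ?_ hF2
            exact mul_le_mul_of_nonneg_right (pow_le_pow_left₀ hs.le hsR 2) hF
          · rw [← h4]
            refine measureReal_mono ?_
              ((measure_mono Set.sdiff_subset).trans_lt measure_closedBall_lt_top).ne
            rintro z ⟨hz1, hz2⟩
            refine ⟨hz2, fun hzE => ?_⟩
            exact absurd (hv z hzE) (not_le.2 hz1))
        (by rw [pow_succ] at hF1; rwa [← mul_assoc (c ^ J)])
        (by
          refine hvol.trans_le ?_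
          rw [pow_succ, mul_assoc]
          exact mul_le_mul_of_nonneg_left hvol' (by positivity)) x hx
      rw [pow_succ, mul_assoc]
      exact this
    · push Not at hb
      have := hg ε F K R h 0 v hε hR0 (hε3 R hR) hh H (by rw [norm_zero]; linarith) hF hF2 (by
        refine le_trans (measureReal_mono ?_ ?_) hb.le
        · rintro z ⟨hz1, hz2⟩
          refine ⟨hz2, fun hzE => ?_⟩
          exact absurd (hv z hzE) (not_le.2 hz1)
        · exact ((measure_mono Set.sdiff_subset).trans_lt measure_closedBall_lt_top).ne) x hx
      refine le_trans ?_ this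
      rw [pow_succ]
      have : c ^ (J + 1) * c ≤ c := by nlinarith
      exact mul_le_mul_of_nonneg_right this hh.le

lemma ink_init {N : ℕ} {s0 R θ : ℝ} {E0 : Set (Eu N)} (hs0 : 0 < s0) (hR : s0 ≤ R) (hθ : 0 < θ)
    (hE0 : E0 ⊆ ball 0 R)
    (hvol : θ * (volume : Measure (Eu N)).real (closedBall 0 R) ≤
      (volume : Measure (Eu N)).real E0) :
    ∃ E1, Ink N s0 R E1 ∧ θ / (2 * 5 ^ N) * (volume : Measure (Eu N)).real (closedBall 0 R) ≤
        (volume : Measure (Eu N)).real E1 ∧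
      ∀ x ∈ E1, ∃ p : Eu N, ‖p‖ + s0 ≤ R ∧ x ∈ closedBall p s0 ∧
        θ / 2 * (volume : Measure (Eu N)).real (closedBall p s0) ≤
          (volume : Measure (Eu N)).real (E0 ∩ closedBall p (5 * s0)) := by
  have hR0 : 0 < R := hs0.trans_le hR
  set P : Eu N → Eu N := fun x => (1 - s0 / R) • x with hP
  have hq : s0 / R ≤ 1 := (div_le_one hR0).2 hR
  have hq0 : 0 < s0 / R := by positivity
  have hqR : s0 / R * R = s0 := by field_simp
  have hP1 : ∀ x ∈ E0, ‖P x‖ + s0 ≤ R := by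
    intro x hx
    have hx := mem_ball_zero_iff.1 (hE0 hx)
    simp only [hP]
    rw [norm_smul, Real.norm_of_nonneg (by linarith)]
    nlinarith
  have hP2 : ∀ x ∈ E0, x ∈ closedBall (P x) s0 := by
    intro x hx
    have hx := mem_ball_zero_iff.1 (hE0 hx)
    have e : x - P x = (s0 / R) • x := by simp only [hP]; rw [sub_smul, one_smul]; abel
    rw [mem_closedBall_iff_norm, e, norm_smul, Real.norm_of_nonneg hq0.le]
    nlinarith
  obtain ⟨u, hut, hud, hucov⟩ := Vitali.exists_disjoint_subfamily_covering_enlargement_closedBall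
    E0 P (fun _ => s0) s0 (fun _ _ => le_rfl) 5 (by norm_num)
  have hcount : u.Countable := hud.countable_of_nonempty_interior fun j hj => by
    have : (ball (P j) s0).Nonempty := nonempty_ball.2 hs0
    exact this.mono ball_subset_interior_closedBall
  set good : Set (Eu N) := {i | i ∈ u ∧ θ / 2 * (volume : Measure (Eu N)).real (closedBall (P i) s0) ≤
          (volume : Measure (Eu N)).real (E0 ∩ closedBall (P i) (5 * s0))} with hgood
  set bad : Set (Eu N) := u \ good with hbad
  have hgu : good ⊆ u := fun i hi => hi.1
  have hbu : bad ⊆ u := fun i hi => hi.1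
  set E1 : Set (Eu N) := ⋃ i ∈ good, closedBall (P i) s0 with hE1
  have hE1m : MeasurableSet E1 :=
    MeasurableSet.biUnion (hcount.mono hgu) fun _ _ => measurableSet_closedBall
  have hink : Ink N s0 R E1 := by
    refine ⟨hE1m, fun x hx => ?_⟩
    rw [hE1, Set.mem_iUnion₂] at hx
    obtain ⟨i, hi, hxi⟩ := hx
    exact ⟨P i, s0, le_rfl, hP1 i (hut hi.1), hxi,
      Set.subset_biUnion_of_mem (u := fun i => closedBall (P i) s0) hi⟩
  have hE1f : volume E1 ≠ ∞ := ((measure_mono hink.sub).trans_lt measure_closedBall_lt_top).ne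
  refine ⟨E1, hink, ?_, ?_⟩
  · have kb := sum_lemma (hcount.mono hbu) (D := fun i => E0 ∩ closedBall (P i) (5 * s0))
      (S := fun i => closedBall (P i) s0) (V := ⋃ i ∈ bad, E0 ∩ closedBall (P i) (5 * s0))
      (T := closedBall 0 R) (C := θ / 2)
      (hud.subset hbu) (fun i _ => measurableSet_closedBall) subset_rfl
      (by
        intro i hi
        apply closedBall_subset_closedBall'
        rw [dist_zero_right]
        linarith [hP1 i (hut hi.1)])
      (by positivity)
      (by
        intro i hi
        by_contra hcon
        push Not at hcon
        exact hi.2 ⟨hi.1, hcon.le⟩)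
      (fun i _ => ((measure_mono Set.inter_subset_right).trans_lt measure_closedBall_lt_top).ne)
      measure_closedBall_lt_top.ne
    have kg := sum_lemma (hcount.mono hgu) (D := fun i => closedBall (P i) (5 * s0))
      (S := fun i => closedBall (P i) s0) (V := ⋃ i ∈ good, E0 ∩ closedBall (P i) (5 * s0))
      (T := E1) (C := 5 ^ N)
      (hud.subset hgu) (fun i _ => measurableSet_closedBall)
      (Set.iUnion₂_mono fun i _ => Set.inter_subset_right)
      (fun i hi => Set.subset_biUnion_of_mem (u := fun i => closedBall (P i) s0) hi)
      (by positivity)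
      (by
        intro i hi
        rw [vr_cball _ _ hs0.le, vr_cball _ _ (by positivity), mul_pow, mul_assoc])
      (fun i _ => measure_closedBall_lt_top.ne) hE1f
    have hsub : E0 ⊆ (⋃ i ∈ bad, E0 ∩ closedBall (P i) (5 * s0)) ∪
        (⋃ i ∈ good, E0 ∩ closedBall (P i) (5 * s0)) := by
      intro x hx
      obtain ⟨b, hb, h⟩ := hucov x hx
      have hxb := h (hP2 x hx)
      by_cases hbg : b ∈ good
      · right
        rw [Set.mem_iUnion₂]
        exact ⟨b, hbg, hx, hxb⟩
      · left
        rw [Set.mem_iUnion₂]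
        exact ⟨b, ⟨hb, hbg⟩, hx, hxb⟩
    have hall : (volume : Measure (Eu N)).real E0 ≤ _ :=
      le_trans (measureReal_mono hsub (by
        refine ((measure_mono (t := ball (0 : Eu N) R) ?_).trans_lt measure_ball_lt_top).ne
        refine Set.union_subset ?_ ?_ <;>
        exact Set.iUnion₂_subset fun i _ => Set.inter_subset_left.trans hE0))
        (measureReal_union_le _ _)
    have h5 : (0 : ℝ) < 5 ^ N := by positivity
    rw [div_mul_eq_mul_div, div_le_iff₀ (by positivity)]
    linarith
  · intro x hx
    rw [hE1, Set.mem_iUnion₂] at hx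
    obtain ⟨i, hi, hxi⟩ := hx
    exact ⟨P i, hP1 i (hut hi.1), hxi, hi.2⟩

lemma core (N : ℕ) (Λ β : ℝ) (hΛ : 1 ≤ Λ) (hβ : 0 < β) (hβ1 : β ≤ 1) :
    ∃ ε₀ : ℝ, 0 < ε₀ ∧ ε₀ ≤ 1 ∧ ∀ θ : ℝ, 0 < θ → ∃ η τ : ℝ, 0 < η ∧ 0 < τ ∧
      ∀ (R ε F : ℝ) (v : Eu N → ℝ), 0 < R → 0 < ε → ε < ε₀ * R → 0 ≤ F →
      SupSol N Λ β ε F (30 * R) 0 v → R ^ 2 * F ≤ τ →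
      θ * (volume : Measure (Eu N)).real (closedBall 0 R) ≤
        (volume : Measure (Eu N)).real ({x | 1 ≤ v x} ∩ ball 0 R) →
      ∀ x ∈ closedBall (0 : Eu N) R, η ≤ v x := by
  obtain ⟨ε3, μ, c, τ, hε3, hμ, -, hc, hc1, hτ, hg⟩ := growth N Λ β hΛ hβ hβ1
  set n : ℝ := max Λ (1 / ε3) with hn
  have hnΛ : Λ ≤ n := le_max_left _ _
  have hn3 : 1 ≤ ε3 * n := by
    have : 1 / ε3 ≤ n := le_max_right _ _
    rw [div_le_iff₀ hε3] at this
    linarith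
  have hn0 : 0 < n := by linarith
  refine ⟨1 / n, by positivity, by rw [div_le_one hn0]; linarith, ?_⟩
  intro θ hθ
  obtain ⟨c1, τ1, hc10, hτ10, hmic⟩ := micro N Λ β hΛ hβ hβ1 n hnΛ (θ / 2) (by positivity)
  have hκ : 1 < 1 + μ / 5 ^ N := by
    have : 0 < μ / 5 ^ N := by positivity
    linarith
  obtain ⟨J, hJ⟩ := pow_unbounded_of_one_lt (2 * 5 ^ N / θ) hκ
  refine ⟨c ^ (J + 1) * c1, min τ1 (τ * (c ^ J * c1)), by positivity, by positivity, ?_⟩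
  intro R ε F v hR hε hεR hF H hRF hvol
  have hnε : 0 < n * ε := by positivity
  have hs0R : n * ε ≤ R := by
    rw [div_mul_eq_mul_div, one_mul, lt_div_iff₀ hn0] at hεR
    linarith
  have hεR1 : ε ≤ R := by nlinarith
  obtain ⟨E1, hI, hv1, hE1⟩ := ink_init hnε hs0R hθ Set.inter_subset_right hvol
  refine ink_final hμ hc hc1 hg hε hnε hs0R ?_ H (by linarith) hF hτ J c1 E1 hc10 hI ?_
    (hRF.trans (min_le_right _ _)) ?_
  · intro s hs
    have h1 : ε3 * (n * ε) ≤ ε3 * s := mul_le_mul_of_nonneg_left hs hε3.le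
    nlinarith
  · intro x hx
    obtain ⟨p, h1, h2, h3⟩ := hE1 x hx
    refine hmic ε F (30 * R) p v hε H (by linarith) ?_ ?_ x h2
    · refine le_trans ?_ (hRF.trans (min_le_left _ _))
      exact mul_le_mul_of_nonneg_right (pow_le_pow_left₀ hε.le hεR1 2) hF
    · refine h3.trans (measureReal_mono ?_
        ((measure_mono Set.inter_subset_right).trans_lt measure_closedBall_lt_top).ne)
      exact Set.inter_subset_inter_left _ Set.inter_subset_left
  · have hB : 0 < (volume : Measure (Eu N)).real (closedBall (0 : Eu N) R) := by
      rw [vr_cball _ _ hR.le]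
      have := om_pos N
      positivity
    rw [div_lt_iff₀ hθ] at hJ
    have h5 : (0 : ℝ) < 2 * 5 ^ N := by positivity
    refine lt_of_lt_of_le ?_ (mul_le_mul_of_nonneg_left hv1 (by positivity))
    have : 1 < (1 + μ / 5 ^ N) ^ J * (θ / (2 * 5 ^ N)) := by
      rw [← mul_div_assoc, lt_div_iff₀ h5]
      linarith
    nlinarith

/-- De Giorgi oscillation lemma for functions satisfying
`L⁺_ε u ≥ −|f|`. -/
theorem de_giorgi_oscillation_pucci (N : ℕ) (hN : 1 ≤ N) (Λ β : ℝ) (hΛ : 1 ≤ Λ)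
    (hβ : β ∈ Set.Ioc (0 : ℝ) 1) :
    ∃ k C ε₀ : ℝ, 1 < k ∧ 0 < C ∧ 0 < ε₀ ∧
      ∀ θ : ℝ, 0 < θ → ∃ η : ℝ, η ∈ Set.Ioo (0 : ℝ) 1 ∧
      ∀ R ε : ℝ, 0 < R → 0 < ε → ε < ε₀ * R →
      ∀ f u : EuclideanSpace ℝ (Fin N) → ℝ,
        Measurable f → (∃ M', ∀ y, |f y| ≤ M') →
        Measurable u → (∃ M', ∀ y, |u y| ≤ M') →
      ∀ m M : ℝ,
        (∀ x ∈ ball (0 : EuclideanSpace ℝ (Fin N)) (k * R),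
          LepsPlus N Λ (1 - β) β ε u x ≥ -|f x|) →
        (∀ x ∈ ball (0 : EuclideanSpace ℝ (Fin N)) (k * R), u x ≤ M) →
        ENNReal.ofReal θ * volume (ball (0 : EuclideanSpace ℝ (Fin N)) R) ≤
          volume (ball (0 : EuclideanSpace ℝ (Fin N)) R ∩ {y | u y ≤ m}) →
        sSup (u '' ball (0 : EuclideanSpace ℝ (Fin N)) R) ≤
          (1 - η) * M + η * m +
            C * R ^ 2 * sSup ((fun y => |f y|) '' ball (0 : EuclideanSpace ℝ (Fin N)) (k * R)) := by
  obtain ⟨ε₀, hε₀, hε₀1, hcore⟩ := core N Λ β hΛ hβ.1 hβ.2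
  refine ⟨30, 1, ε₀, by norm_num, one_pos, hε₀, ?_⟩
  intro θ hθ
  obtain ⟨η, τ, hη, hτ, hmain⟩ := hcore θ hθ
  refine ⟨min (min η τ) (1 / 2), ⟨by positivity, ?_⟩, ?_⟩
  · exact lt_of_le_of_lt (min_le_right _ _) (by norm_num)
  have hη0 : 0 < min (min η τ) (1 / 2) := by positivity
  have hηη : min (min η τ) (1 / 2) ≤ η := (min_le_left _ _).trans (min_le_left _ _)
  have hητ : min (min η τ) (1 / 2) ≤ τ := (min_le_left _ _).trans (min_le_right _ _)
  generalize min (min η τ) (1 / 2) = e at hη0 hηη hητ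
  intro R ε hR hε hεR f u hfm hfb hum hub m M hL hM hvol
  obtain ⟨Bf, hBf⟩ := hfb
  obtain ⟨Bu, hBu⟩ := hub
  set S : ℝ := sSup ((fun y => |f y|) '' ball (0 : EuclideanSpace ℝ (Fin N)) (30 * R)) with hS
  have hfS : ∀ x ∈ ball (0 : EuclideanSpace ℝ (Fin N)) (30 * R), |f x| ≤ S := by
    intro x hx
    refine le_csSup ⟨Bf, ?_⟩ ⟨x, hx, rfl⟩
    rintro _ ⟨y, -, rfl⟩
    exact hBf y
  have hS0 : 0 ≤ S := (abs_nonneg _).trans (hfS 0 (mem_ball_self (by positivity)))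
  have hRS : 0 ≤ R ^ 2 * S := by positivity
  have hsub : ball (0 : EuclideanSpace ℝ (Fin N)) R ⊆ ball 0 (30 * R) :=
    ball_subset_ball (by linarith)
  refine csSup_le ((nonempty_ball.2 hR).image _) ?_
  rintro _ ⟨x, hx, rfl⟩
  have hxM := hM x (hsub hx)
  rw [one_mul]
  rcases le_or_gt M m with hMm | hMm
  · nlinarith
  have hd : 0 < M - m := by linarith
  set a : ℝ := (M - m)⁻¹ with ha
  have ha0 : 0 < a := inv_pos.2 hd
  have had : a * (M - m) = 1 := inv_mul_cancel₀ hd.ne'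
  set v : EuclideanSpace ℝ (Fin N) → ℝ := fun y => a * (M - u y) with hv
  have hvx : 0 ≤ v x := mul_nonneg ha0.le (by linarith)
  have hsd : ∀ y z, secondDiff N v y z = -a * secondDiff N u y z := by
    intro y z
    simp only [secondDiff, hv]
    ring
  have H : SupSol N Λ β ε (a * S) (30 * R) 0 v := by
    refine ⟨(measurable_const.sub hum).const_mul a, ⟨a * (|M| + Bu), fun y => ?_⟩,
      fun y hy => mul_nonneg ha0.le (by linarith [hM y hy]), ?_⟩
    · simp only [hv]
      rw [abs_mul, abs_of_pos ha0]
      refine mul_le_mul_of_nonneg_left ((abs_sub _ _).trans ?_) ha0.le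
      linarith [hBu y]
    · intro y hy l hl
      have h1 := hL y hy
      have h2 := hfS y hy
      rw [LepsPlus, ge_iff_le, one_div, inv_mul_eq_div, le_div_iff₀ (by positivity)] at h1
      have h3 : sSup ((fun z => secondDiff N u y (ε • z)) '' ball (0 : EuclideanSpace ℝ (Fin N)) Λ)
          ≤ -(l * (M - m)) := by
        refine csSup_le ((nonempty_ball.2 (by linarith)).image _) ?_
        rintro _ ⟨z, hz, rfl⟩
        have := hl z hz
        rw [hsd] at this
        simp only
        have h4 := mul_le_mul_of_nonneg_right this hd.le
        have h5 : -a * secondDiff N u y (ε • z) * (M - m) = -secondDiff N u y (ε • z) := by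
          linear_combination (-secondDiff N u y (ε • z)) * had
        linarith
      have h6 : (⨍ z in ball (0 : EuclideanSpace ℝ (Fin N)) 1, secondDiff N v y (ε • z)) =
          -a * ⨍ z in ball (0 : EuclideanSpace ℝ (Fin N)) 1, secondDiff N u y (ε • z) := by
        simp only [hsd]
        rw [average_eq, average_eq, integral_const_mul, smul_eq_mul, smul_eq_mul]
        ring
      rw [h6]
      generalize (⨍ z in ball (0 : EuclideanSpace ℝ (Fin N)) 1, secondDiff N u y (ε • z)) = A
        at h1 ⊢
      have hb : 0 ≤ 1 - β := by linarith [hβ.2]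
      have h7 := mul_le_mul_of_nonneg_left h3 hb
      have h8 : |f y| * (2 * ε ^ 2) ≤ S * (2 * ε ^ 2) :=
        mul_le_mul_of_nonneg_right h2 (by positivity)
      have h9 : (1 - β) * (l * (M - m)) - β * A ≤ S * (2 * ε ^ 2) := by linarith
      have h10 := mul_le_mul_of_nonneg_left h9 ha0.le
      have h11 : a * ((1 - β) * (l * (M - m)) - β * A) = (1 - β) * l + β * (-a * A) := by
        linear_combination ((1 - β) * l) * had
      linarith
  have key : e - R ^ 2 * (a * S) ≤ v x := by
    rcases le_or_gt (R ^ 2 * (a * S)) τ with hle | hgt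
    · have h1 : θ * (volume : Measure (Eu N)).real (closedBall 0 R) ≤
          (volume : Measure (Eu N)).real ({x | 1 ≤ v x} ∩ ball 0 R) := by
        have hset : ball (0 : EuclideanSpace ℝ (Fin N)) R ∩ {y | u y ≤ m} =
            {x | 1 ≤ v x} ∩ ball 0 R := by
          rw [Set.inter_comm]
          congr 1
          ext y
          simp only [Set.mem_ofPred_eq, hv]
          constructor
          · intro h
            rw [← had]
            exact mul_le_mul_of_nonneg_left (by linarith) ha0.le
          · intro h
            rw [← had] at h
            have := le_of_mul_le_mul_left h ha0
            linarith
        rw [hset] at hvol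
        have h2 := ENNReal.toReal_mono
          ((measure_mono Set.inter_subset_right).trans_lt measure_ball_lt_top).ne hvol
        rw [ENNReal.toReal_mul, ENNReal.toReal_ofReal hθ.le, ← measureReal_def, ← measureReal_def,
          vr_ball _ _ hR] at h2
        rwa [vr_cball _ _ hR.le]
      have := hmain R ε (a * S) v hR hε hεR (by positivity) H hle h1 x (ball_subset_closedBall hx)
      have : 0 ≤ R ^ 2 * (a * S) := by positivity
      linarith
    · linarith
  have h1 := mul_le_mul_of_nonneg_right key hd.le
  have h2 : v x * (M - m) = M - u x := by
    simp only [hv]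
    linear_combination (M - u x) * had
  have h3 : (e - R ^ 2 * (a * S)) * (M - m) = e * (M - m) - R ^ 2 * S := by
    linear_combination (-(R ^ 2 * S)) * had
  linarith
end
end

section
/- Let Ω ⊂ ℝ^N be a bounded domain and f : Ω → ℝ a bounded Borel measurable function. If u, v : ℝ^N → ℝ are bounded Borel measurable functions which agree on ℝ^N ∖ Ω and each w ∈ {u, v} satisfies w(x) = α sup_{z ∈ B_Λ} (w(x+εz) + w(x−εz))/2 + β ⨍_{B_ε(x)} w(y) dy + ε² f(x) for every x ∈ Ω, then u = v on ℝ^N. -/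
open MeasureTheory Metric

noncomputable section

lemma avg_aux (N : ℕ) (i : Fin N) (ε : ℝ) (hε : 0 < ε)
    (u v : EuclideanSpace ℝ (Fin N) → ℝ)
    (hu : Measurable u) (hub : ∃ M, ∀ y, |u y| ≤ M)
    (hv : Measurable v) (hvb : ∃ M, ∀ y, |v y| ≤ M)
    (x : EuclideanSpace ℝ (Fin N)) (c M δ : ℝ) (hM : ∀ y, u y ≤ v y + M)
    (hδ : ∀ y : EuclideanSpace ℝ (Fin N), x i + ε / 2 < y i → u y ≤ v y + M - δ) :
    (⨍ y in ball x ε, u y + c) ≤ (⨍ y in ball x ε, v y + c) + M -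
      (volume.real (ball (0 : EuclideanSpace ℝ (Fin N)) ε))⁻¹ *
      volume.real (ball (0 : EuclideanSpace ℝ (Fin N)) (ε / 4)) * δ := by
  obtain ⟨Mu, hMu⟩ := hub
  obtain ⟨Mv, hMv⟩ := hvb
  have hV : volume.real (ball x ε) = volume.real (ball (0 : EuclideanSpace ℝ (Fin N)) ε) := by
    simp only [Measure.real, Measure.addHaar_ball_center]
  have hVpos : 0 < volume.real (ball (0 : EuclideanSpace ℝ (Fin N)) ε) :=
    ENNReal.toReal_pos (measure_ball_pos _ _ hε).ne' measure_ball_lt_top.ne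
  set p : EuclideanSpace ℝ (Fin N) := x + EuclideanSpace.single i (3 * ε / 4) with hp
  have hpx : dist p x = 3 * ε / 4 := by
    rw [hp, dist_eq_norm, add_sub_cancel_left, EuclideanSpace.norm_single, Real.norm_eq_abs,
      abs_of_pos (by positivity)]
  have hA : ball p (ε / 4) ⊆ ball x ε := ball_subset_ball' (by rw [hpx]; linarith)
  have hAv : volume.real (ball p (ε / 4)) =
      volume.real (ball (0 : EuclideanSpace ℝ (Fin N)) (ε / 4)) := by
    simp only [Measure.real, Measure.addHaar_ball_center]
  have hAi : ∀ y ∈ ball p (ε / 4), x i + ε / 2 < y i := by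
    intro y hy
    have h1 : ‖(y - p) i‖ ≤ ‖y - p‖ := PiLp.norm_apply_le (y - p) i
    rw [mem_ball, dist_eq_norm] at hy
    have h2 : |y i - p i| < ε / 4 := lt_of_le_of_lt (by simpa using h1) hy
    have h3 : p i = x i + 3 * ε / 4 := by simp [hp]
    rw [h3] at h2
    have := (abs_lt.1 h2).1
    linarith
  haveI : IsFiniteMeasure (volume.restrict (ball x ε)) :=
    ⟨by simpa using measure_ball_lt_top⟩
  have iu : Integrable u (volume.restrict (ball x ε)) :=
    Integrable.of_bound hu.aestronglyMeasurable Mu (Filter.Eventually.of_forall hMu)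
  have iv : Integrable v (volume.restrict (ball x ε)) :=
    Integrable.of_bound hv.aestronglyMeasurable Mv (Filter.Eventually.of_forall hMv)
  have ic : ∀ c : ℝ, Integrable (fun _ => c) (volume.restrict (ball x ε)) :=
    fun c => integrable_const c
  have ii : Integrable ((ball p (ε / 4)).indicator (fun _ => δ)) (volume.restrict (ball x ε)) :=
    (ic δ).indicator measurableSet_ball
  have key : ∫ y in ball x ε, (u y + c) ≤
      ∫ y in ball x ε, (((v y + c) + M) - (ball p (ε / 4)).indicator (fun _ => δ) y) := by
    apply integral_mono (iu.add (ic c)) (((iv.add (ic c)).add (ic M)).sub ii)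
    intro y
    by_cases hy : y ∈ ball p (ε / 4)
    · simp only [Pi.add_apply, Pi.sub_apply, Set.indicator_of_mem hy]
      linarith [hδ y (hAi y hy)]
    · simp only [Pi.add_apply, Pi.sub_apply, Set.indicator_of_notMem hy]
      linarith [hM y]
  have ivc : Integrable (fun y => v y + c) (volume.restrict (ball x ε)) := iv.add (ic c)
  have ivcM : Integrable (fun y => v y + c + M) (volume.restrict (ball x ε)) := ivc.add (ic M)
  rw [integral_sub ivcM ii, integral_add ivc (ic M),
    integral_indicator measurableSet_ball, setIntegral_const,
    Measure.restrict_restrict measurableSet_ball, Set.inter_eq_left.2 hA, setIntegral_const,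
    hAv, hV] at key
  rw [setAverage_eq, setAverage_eq, hV]
  simp only [smul_eq_mul, Pi.add_apply] at key ⊢
  have := mul_le_mul_of_nonneg_left key (inv_nonneg.2 hVpos.le)
  refine this.trans (le_of_eq ?_)
  field_simp

lemma DPP_aux (N : ℕ) (hN : 1 ≤ N) (Λ β ε : ℝ) (hΛ : 1 ≤ Λ)
    (hβ : β ∈ Set.Ioc (0 : ℝ) 1) (hε : 0 < ε)
    (D : Set (EuclideanSpace ℝ (Fin N)))
    (hDb : Bornology.IsBounded D)
    (f u v : EuclideanSpace ℝ (Fin N) → ℝ)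
    (hu : Measurable u) (hub : ∃ M, ∀ y, |u y| ≤ M)
    (hv : Measurable v) (hvb : ∃ M, ∀ y, |v y| ≤ M)
    (hagree : ∀ x ∉ D, u x = v x)
    (hDPPu : ∀ x ∈ D, u x =
      (1 - β) * sSup ((fun z => (u (x + ε • z) + u (x - ε • z)) / 2) ''
        ball (0 : EuclideanSpace ℝ (Fin N)) Λ) +
      β * ⨍ y in ball x ε, u y + ε ^ 2 * f x)
    (hDPPv : ∀ x ∈ D, v x =
      (1 - β) * sSup ((fun z => (v (x + ε • z) + v (x - ε • z)) / 2) ''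
        ball (0 : EuclideanSpace ℝ (Fin N)) Λ) +
      β * ⨍ y in ball x ε, v y + ε ^ 2 * f x) :
    ∀ x, u x ≤ v x := by
  by_contra! hcon
  obtain ⟨x₀, hx₀⟩ := hcon
  obtain ⟨hβ0, hβ1⟩ := hβ
  obtain ⟨Mu, hMu⟩ := id hub
  obtain ⟨Mv, hMv⟩ := id hvb
  have hbdd : BddAbove (Set.range fun x => u x - v x) := by
    refine ⟨Mu + Mv, ?_⟩
    rintro _ ⟨y, rfl⟩
    have h1 := (abs_le.1 (hMu y)).2
    have h2 := (abs_le.1 (hMv y)).1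
    dsimp only
    linarith
  set M := sSup (Set.range fun x => u x - v x) with hMdef
  have hle : ∀ y, u y - v y ≤ M := fun y => le_csSup hbdd ⟨y, rfl⟩
  have hM0 : 0 < M := lt_of_lt_of_le (sub_pos.2 hx₀) (hle x₀)
  have hM : ∀ y, u y ≤ v y + M := fun y => by linarith [hle y]
  have hsup : ∀ x, sSup ((fun z => (u (x + ε • z) + u (x - ε • z)) / 2) ''
        ball (0 : EuclideanSpace ℝ (Fin N)) Λ) ≤
      sSup ((fun z => (v (x + ε • z) + v (x - ε • z)) / 2) ''
        ball (0 : EuclideanSpace ℝ (Fin N)) Λ) + M := by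
    intro x
    apply csSup_le
    · exact (nonempty_ball.2 (by linarith)).image _
    rintro _ ⟨z, hz, rfl⟩
    have hb : BddAbove ((fun z => (v (x + ε • z) + v (x - ε • z)) / 2) ''
        ball (0 : EuclideanSpace ℝ (Fin N)) Λ) := by
      refine ⟨Mv, ?_⟩
      rintro _ ⟨z, hz, rfl⟩
      have h1 := (abs_le.1 (hMv (x + ε • z))).2
      have h2 := (abs_le.1 (hMv (x - ε • z))).2
      dsimp only
      linarith
    have h3 := le_csSup hb ⟨z, hz, rfl⟩
    have h1 := hM (x + ε • z)
    have h2 := hM (x - ε • z)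
    dsimp only at h3 ⊢
    linarith
  obtain ⟨R, hR⟩ := hDb.exists_norm_le
  let i : Fin N := ⟨0, hN⟩
  have hRi : ∀ x ∈ D, |x i| ≤ R := fun x hx => (PiLp.norm_apply_le x i).trans (hR x hx)
  set θ := (volume.real (ball (0 : EuclideanSpace ℝ (Fin N)) ε))⁻¹ *
      volume.real (ball (0 : EuclideanSpace ℝ (Fin N)) (ε / 4)) with hθ
  have hθ0 : 0 < θ := by
    have : ∀ r : ℝ, 0 < r → 0 < volume.real (ball (0 : EuclideanSpace ℝ (Fin N)) r) :=
      fun r hr => ENNReal.toReal_pos (measure_ball_pos _ _ hr).ne' measure_ball_lt_top.ne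
    exact mul_pos (inv_pos.2 (this _ hε)) (this _ (by positivity))
  have ind : ∀ n : ℕ, ∃ δ > 0, ∀ x : EuclideanSpace ℝ (Fin N),
      R - n * (ε / 2) < x i → u x ≤ v x + M - δ := by
    intro n
    induction n with
    | zero =>
      refine ⟨M, hM0, fun x hx => ?_⟩
      have : x ∉ D := fun h => by
        have := (abs_le.1 (hRi x h)).2
        simp at hx
        linarith
      rw [hagree x this]
      linarith
    | succ n ih =>
      obtain ⟨δ, hδ, h⟩ := ih
      refine ⟨min M (β * (θ * δ)), lt_min hM0 (by positivity), fun x hx => ?_⟩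
      by_cases hxD : x ∈ D
      · have h1 := avg_aux N i ε hε u v hu hub hv hvb x (ε ^ 2 * f x) M δ hM (fun y hy => h y (by
          push_cast at hx
          linarith))
        rw [← hθ] at h1
        have h2 := mul_le_mul_of_nonneg_left h1 hβ0.le
        have h3 := mul_le_mul_of_nonneg_left (hsup x) (sub_nonneg.2 hβ1)
        have h4 := min_le_right M (β * (θ * δ))
        rw [hDPPu x hxD, hDPPv x hxD]
        linarith
      · rw [hagree x hxD]
        linarith [min_le_left M (β * (θ * δ))]
  obtain ⟨n, hn⟩ := exists_nat_gt ((2 * R) / (ε / 2))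
  rw [div_lt_iff₀ (by positivity)] at hn
  obtain ⟨δ, hδ, h⟩ := ind n
  have : M ≤ M - min M δ := by
    apply csSup_le (Set.range_nonempty _)
    rintro _ ⟨x, rfl⟩
    dsimp only
    by_cases hxD : x ∈ D
    · have := h x (by linarith [(abs_le.1 (hRi x hxD)).1])
      linarith [min_le_right M δ]
    · rw [hagree x hxD]
      linarith [min_le_left M δ]
  linarith [lt_min hM0 hδ]

/-- uniqueness of bounded Borel solutions of the dynamic programming
principle associated to the maximal Pucci-type operator, with given boundary values. -/
theorem DPP_sup_uniqueness (N : ℕ) (hN : 1 ≤ N) (Λ β ε : ℝ) (hΛ : 1 ≤ Λ)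
    (hβ : β ∈ Set.Ioc (0 : ℝ) 1) (hε : 0 < ε)
    (D : Set (EuclideanSpace ℝ (Fin N))) (hD : IsOpen D) (hDc : IsConnected D)
    (hDb : Bornology.IsBounded D)
    (f u v : EuclideanSpace ℝ (Fin N) → ℝ)
    (hf : Measurable f) (hfb : ∃ M, ∀ y, |f y| ≤ M)
    (hu : Measurable u) (hub : ∃ M, ∀ y, |u y| ≤ M)
    (hv : Measurable v) (hvb : ∃ M, ∀ y, |v y| ≤ M)
    (hagree : ∀ x ∉ D, u x = v x)
    (hDPPu : ∀ x ∈ D, u x =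
      (1 - β) * sSup ((fun z => (u (x + ε • z) + u (x - ε • z)) / 2) ''
        ball (0 : EuclideanSpace ℝ (Fin N)) Λ) +
      β * ⨍ y in ball x ε, u y + ε ^ 2 * f x)
    (hDPPv : ∀ x ∈ D, v x =
      (1 - β) * sSup ((fun z => (v (x + ε • z) + v (x - ε • z)) / 2) ''
        ball (0 : EuclideanSpace ℝ (Fin N)) Λ) +
      β * ⨍ y in ball x ε, v y + ε ^ 2 * f x) :
    ∀ x, u x = v x := by
  intro x
  exact le_antisymm
    (DPP_aux N hN Λ β ε hΛ hβ hε D hDb f u v hu hub hv hvb hagree hDPPu hDPPv x)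
    (DPP_aux N hN Λ β ε hΛ hβ hε D hDb f v u hv hvb hu hub
      (fun y hy => (hagree y hy).symm) hDPPv hDPPu x)
end
end
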